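/- arXiv:1301.1401 — 2 statements merged into one kernel-verified Lean document; each statement's English description precedes it below -/
import Mathlib

section
/- Let p and q be distinct primes and m ∈ ℕ. Then K_1(C_{p^m} ⊕ C_q ⊕ C_q) = Σ_{k=1}^m 1/p^{k−1} + 2 = (p^m − 1)/(p^m − p^{m−1}) + 2. -/
open Finset

/-- `S(I)` is minimal zero-sum: nonempty, zero-sum, and no proper nonempty
subfamily is zero-sum. -/
def IsMinZeroSum {G : Type*} [AddCommGroup G] {ℓ : ℕ} (g : Fin ℓ → G)
    (I : Finset (Fin ℓ)) : Prop :=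
  I.Nonempty ∧ ∑ i ∈ I, g i = 0 ∧ ∀ J ⊂ I, J.Nonempty → ∑ i ∈ J, g i ≠ 0

/-- `P` is an irreducible factorization of the indexed multiset `g`: a partition
of the index set all of whose parts are minimal zero-sum. -/
def IsFactorization {G : Type*} [AddCommGroup G] {ℓ : ℕ} (g : Fin ℓ → G)
    (P : Finpartition (Finset.univ : Finset (Fin ℓ))) : Prop :=
  ∀ I ∈ P.parts, IsMinZeroSum g I

/-- `g` is a unique factorization indexed multiset (UFIM) over `G∖{0}`:
all elements are nonzero and there is exactly one irreducible factorization. -/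
def IsUFIM {G : Type*} [AddCommGroup G] {ℓ : ℕ} (g : Fin ℓ → G) : Prop :=
  (∀ i, g i ≠ 0) ∧
  ∃! P : Finpartition (Finset.univ : Finset (Fin ℓ)), IsFactorization g P

/-- The cross number `k(S) = ∑ 1/ord(g_i)`. -/
noncomputable def crossNum {G : Type*} [AddCommGroup G] {ℓ : ℕ} (g : Fin ℓ → G) : ℝ :=
  ∑ i, (1 : ℝ) / (addOrderOf (g i) : ℝ)

/-- `K₁(G)`: the maximal cross number of a UFIM over `G∖{0}`. -/
noncomputable def K1 (G : Type*) [AddCommGroup G] : ℝ :=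
  sSup {x : ℝ | ∃ (ℓ : ℕ) (g : Fin ℓ → G), IsUFIM g ∧ crossNum g = x}

/-- `N₁(G)`: the maximal length of a UFIM over `G∖{0}`. -/
noncomputable def N1 (G : Type*) [AddCommGroup G] : ℕ :=
  sSup {n : ℕ | ∃ g : Fin n → G, IsUFIM g}

/-- `K(G)`: the maximal cross number of a minimal zero-sum indexed multiset over `G∖{0}`. -/
noncomputable def Kcross (G : Type*) [AddCommGroup G] : ℝ :=
  sSup {x : ℝ | ∃ (ℓ : ℕ) (g : Fin ℓ → G), (∀ i, g i ≠ 0) ∧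
    IsMinZeroSum g Finset.univ ∧ crossNum g = x}

/-- `g` is zero-sum free: no nonempty subfamily is zero-sum. -/
def IsZeroSumFree {G : Type*} [AddCommGroup G] {ℓ : ℕ} (g : Fin ℓ → G) : Prop :=
  ∀ I : Finset (Fin ℓ), I.Nonempty → ∑ i ∈ I, g i ≠ 0

/-- The little cross number `k(G)`: the maximal cross number of a zero-sum free
indexed multiset over `G∖{0}`. -/
noncomputable def littleCross (G : Type*) [AddCommGroup G] : ℝ :=
  sSup {x : ℝ | ∃ (ℓ : ℕ) (g : Fin ℓ → G), (∀ i, g i ≠ 0) ∧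
    IsZeroSumFree g ∧ crossNum g = x}

section UFsec
variable {ι : Type*} [DecidableEq ι] {G : Type*} [AddCommGroup G]

/-- Intrinsic version of unique factorization: total sum zero and the zero-sum subsets are
closed under intersection. -/
structure UF (s : Finset ι) (g : ι → G) : Prop where
  tot : ∑ i ∈ s, g i = 0
  inter : ∀ I ⊆ s, ∀ J ⊆ s, ∑ i ∈ I, g i = 0 → ∑ i ∈ J, g i = 0 → ∑ i ∈ I ∩ J, g i = 0

/-- Minimal zero-sum subsets over a general index type. -/
def MinZ (g : ι → G) (I : Finset ι) : Prop :=
  I.Nonempty ∧ ∑ i ∈ I, g i = 0 ∧ ∀ J ⊂ I, J.Nonempty → ∑ i ∈ J, g i ≠ 0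

theorem sdiff_zero {g : ι → G} {I J : Finset ι} (h : J ⊆ I) (hI : ∑ i ∈ I, g i = 0)
    (hJ : ∑ i ∈ J, g i = 0) : ∑ i ∈ I \ J, g i = 0 := by
  have := Finset.sum_sdiff (f := g) h
  rw [hI, hJ, add_zero] at this
  exact this

theorem union_sum {g : ι → G} {I J : Finset ι} (h : Disjoint I J) :
    ∑ i ∈ I ∪ J, g i = ∑ i ∈ I, g i + ∑ i ∈ J, g i := Finset.sum_union h

theorem UF.sdiff {s : Finset ι} {g : ι → G} (h : UF s g) {D : Finset ι} (hD : D ⊆ s)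
    (h0 : ∑ i ∈ D, g i = 0) : UF (s \ D) g where
  tot := sdiff_zero hD h.tot h0
  inter I hI J hJ := h.inter I (hI.trans sdiff_subset) J (hJ.trans sdiff_subset)

theorem MinZ.sub_or_disj {s : Finset ι} {g : ι → G} (h : UF s g) {T Z : Finset ι}
    (hT : MinZ g T) (hTs : T ⊆ s) (hZs : Z ⊆ s) (hZ : ∑ i ∈ Z, g i = 0) :
    T ⊆ Z ∨ Disjoint T Z := by
  by_cases hd : T ⊆ Z
  · exact Or.inl hd
  · right
    rw [Finset.disjoint_iff_inter_eq_empty]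
    by_contra hne
    refine hT.2.2 (T ∩ Z) ?_ (Finset.nonempty_iff_ne_empty.2 hne) (h.inter _ hTs _ hZs hT.2.1 hZ)
    refine ⟨inter_subset_left, fun hh => hd (hh.trans inter_subset_right)⟩

theorem MinZ.disj {s : Finset ι} {g : ι → G} (h : UF s g) {T T' : Finset ι}
    (hT : MinZ g T) (hT' : MinZ g T') (hTs : T ⊆ s) (hTs' : T' ⊆ s) (hne : T ≠ T') :
    Disjoint T T' := by
  rcases hT.sub_or_disj h hTs hTs' hT'.2.1 with h1 | h1
  · rcases hT'.sub_or_disj h hTs' hTs hT.2.1 with h2 | h2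
    · exact absurd (Finset.Subset.antisymm h1 h2) hne
    · exact h2.symm
  · exact h1

/-- Every point of a zero-sum set lies in a minimal zero-sum subset (no uniqueness needed). -/
theorem exists_minZ {g : ι → G} (n : ℕ) : ∀ U : Finset ι, U.card ≤ n →
    ∑ i ∈ U, g i = 0 → ∀ x ∈ U, ∃ T ⊆ U, x ∈ T ∧ MinZ g T := by
  induction n with
  | zero =>
    intro U hU _ x hx
    have : U = ∅ := Finset.card_eq_zero.1 (by omega)
    simp [this] at hx
  | succ n ih =>
    intro U hU h0 x hx
    by_cases hm : MinZ g U
    · exact ⟨U, Finset.Subset.refl _, hx, hm⟩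
    · have : ∃ J ⊂ U, J.Nonempty ∧ ∑ i ∈ J, g i = 0 := by
        by_contra hcon
        push Not at hcon
        exact hm ⟨⟨x, hx⟩, h0, hcon⟩
      obtain ⟨J, hJ, hJn, hJ0⟩ := this
      have hc := Finset.card_lt_card hJ
      by_cases hxJ : x ∈ J
      · obtain ⟨T, h1, h2, h3⟩ := ih J (by omega) hJ0 x hxJ
        exact ⟨T, h1.trans hJ.1, h2, h3⟩
      · have hc2 : (U \ J).card ≤ n := by
          have := Finset.card_sdiff_add_card_eq_card hJ.1
          have := hJn.card_pos
          omega
        obtain ⟨T, h1, h2, h3⟩ := ih (U \ J) hc2 (sdiff_zero hJ.1 h0 hJ0) x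
          (by simp [hx, hxJ])
        exact ⟨T, h1.trans sdiff_subset, h2, h3⟩

/-- Merging a set of indices into a single index. -/
theorem UF.merge {s : Finset ι} {g : ι → G} (h : UF s g) {D : Finset ι} (hD : D ⊆ s) {d : ι}
    (hd : d ∈ D) : UF (insert d (s \ D)) (Function.update g d (∑ i ∈ D, g i)) := by
  set g' := Function.update g d (∑ i ∈ D, g i) with hg'
  let f : Finset ι → Finset ι := fun I => if d ∈ I then (I.erase d) ∪ D else I
  have key : ∀ I ⊆ insert d (s \ D), ∑ i ∈ f I, g i = ∑ i ∈ I, g' i := by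
    intro I hI
    by_cases hdI : d ∈ I
    · have hdis : Disjoint (I.erase d) D := by
        rw [Finset.disjoint_left]
        intro x hx hxD
        have := hI (Finset.mem_of_mem_erase hx)
        simp only [mem_insert, mem_sdiff] at this
        rcases this with h1 | h1
        · exact (Finset.ne_of_mem_erase hx) h1
        · exact h1.2 hxD
      simp only [f, hdI, if_true]
      rw [Finset.sum_union hdis, ← Finset.sum_erase_add I g' hdI]
      congr 1
      · refine Finset.sum_congr rfl fun x hx => ?_
        rw [hg', Function.update_of_ne (Finset.ne_of_mem_erase hx)]
      · simp [hg']
    · simp only [f, hdI, if_false]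
      refine Finset.sum_congr rfl fun x hx => ?_
      rw [hg', Function.update_of_ne]
      rintro rfl
      exact hdI hx
  have fsub : ∀ I ⊆ insert d (s \ D), f I ⊆ s := by
    intro I hI x hx
    have hI' := fun y hy => Finset.mem_insert.1 (@hI y hy)
    by_cases hdI : d ∈ I
    · simp only [f, hdI, if_true, mem_union, mem_erase] at hx
      rcases hx with h1 | h1
      · rcases hI' x h1.2 with h2 | h2
        · exact absurd h2 h1.1
        · exact (Finset.mem_sdiff.1 h2).1
      · exact hD h1
    · simp only [f, hdI, if_false] at hx
      rcases hI' x hx with h2 | h2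
      · subst h2; exact absurd hx hdI
      · exact (Finset.mem_sdiff.1 h2).1
  have finter : ∀ I ⊆ insert d (s \ D), ∀ J ⊆ insert d (s \ D), f (I ∩ J) = f I ∩ f J := by
    intro I hI J hJ
    have hI' : ∀ y ∈ I, y = d ∨ (y ∈ s ∧ y ∉ D) := by
      intro y hy; simpa using hI hy
    have hJ' : ∀ y ∈ J, y = d ∨ (y ∈ s ∧ y ∉ D) := by
      intro y hy; simpa using hJ hy
    ext x
    by_cases h1 : d ∈ I <;> by_cases h2 : d ∈ J <;>
      simp only [f, h1, h2, mem_inter, mem_union, mem_erase, if_true, if_false, and_true, and_false,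
        and_self] <;> grind
  refine ⟨?_, ?_⟩
  · rw [← key _ (Finset.Subset.refl _), ← h.tot]
    congr 1
    simp only [f, mem_insert_self, if_true]
    ext x
    simp only [mem_union, mem_erase, mem_insert, mem_sdiff]
    constructor
    · rintro (⟨h1, h2 | h2⟩ | h2)
      · exact absurd h2 h1
      · exact h2.1
      · exact hD h2
    · intro hx
      by_cases hxD : x ∈ D
      · exact Or.inr hxD
      · left
        refine ⟨?_, Or.inr ⟨hx, hxD⟩⟩
        rintro rfl
        exact hxD hd
  · intro I hI J hJ hI0 hJ0
    rw [← key _ (inter_subset_left.trans hI), finter I hI J hJ]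
    exact h.inter _ (fsub I hI) _ (fsub J hJ) ((key I hI).trans hI0) ((key J hJ).trans hJ0)

/-- Chain lemma: a zero-sum free family yields a large set of partial sums. -/
theorem chain_free (h : ι → G) (K : AddSubgroup G) [DecidableEq G] (V : Finset ι)
    (hK : ∀ x ∈ V, h x ∈ K)
    (hV : ∀ J ⊆ V, J.Nonempty → ∑ i ∈ J, h i ≠ 0) :
    ∃ W : Finset G, W.card = V.card + 1 ∧ (∀ w ∈ W, w ∈ K) ∧
      (∀ w ∈ W, ∃ Z ⊆ V, ∑ i ∈ Z, h i = ∑ i ∈ V, h i - w) ∧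
      (∀ w ∈ W, ∀ w' ∈ W, ∃ Z ⊆ V, ∑ i ∈ Z, h i = w - w' ∨ ∑ i ∈ Z, h i = w' - w) := by
  induction V using Finset.induction_on with
  | empty => exact ⟨{0}, by simp, by simp, by simp, by simp⟩
  | insert x V hx ih =>
    obtain ⟨W, h1, h2, h3, h4⟩ := ih (fun y hy => hK y (by simp [hy]))
      (fun J hJ => hV J (hJ.trans (subset_insert _ _)))
    have hnew : ∀ w ∈ W, ∃ Z ⊆ insert x V, Z.Nonempty ∧
        ∑ i ∈ Z, h i = ∑ i ∈ insert x V, h i - w := by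
      intro w hw
      obtain ⟨Z, hZ, hZs⟩ := h3 w hw
      refine ⟨insert x Z, Finset.insert_subset_insert _ hZ, ⟨x, by simp⟩, ?_⟩
      rw [Finset.sum_insert (fun hh => hx (hZ hh)), Finset.sum_insert hx, hZs]
      abel
    refine ⟨insert (∑ i ∈ insert x V, h i) W, ?_, ?_, ?_, ?_⟩
    · rw [Finset.card_insert_of_notMem, h1, Finset.card_insert_of_notMem hx]
      intro hmem
      obtain ⟨Z, hZ, hZn, hZs⟩ := hnew _ hmem
      exact hV Z hZ hZn (by rw [hZs, sub_self])
    · intro w hw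
      rcases Finset.mem_insert.1 hw with rfl | hw
      · exact K.sum_mem hK
      · exact h2 w hw
    · intro w hw
      rcases Finset.mem_insert.1 hw with rfl | hw
      · exact ⟨∅, by simp, by simp⟩
      · obtain ⟨Z, hZ, _, hZs⟩ := hnew w hw
        exact ⟨Z, hZ, hZs⟩
    · intro w hw w' hw'
      rcases Finset.mem_insert.1 hw with rfl | hw <;> rcases Finset.mem_insert.1 hw' with rfl | hw'
      · exact ⟨∅, by simp, by simp⟩
      · obtain ⟨Z, hZ, _, hZs⟩ := hnew w' hw'
        exact ⟨Z, hZ, Or.inl hZs⟩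
      · obtain ⟨Z, hZ, _, hZs⟩ := hnew w hw
        exact ⟨Z, hZ, Or.inr hZs⟩
      · obtain ⟨Z, hZ, hZs⟩ := h4 w hw w' hw'
        exact ⟨Z, hZ.trans (subset_insert _ _), hZs⟩

/-- Product lemma. -/
theorem chain_prod (h : ι → G) (K : AddSubgroup G) [DecidableEq G] (n : ℕ) : ∀ X : Finset ι,
    X.card ≤ n → (∀ x ∈ X, h x ∈ K) → (∀ x ∈ X, h x ≠ 0) →
    (∀ I ⊆ X, ∀ J ⊆ X, ∑ i ∈ I, h i = 0 → ∑ i ∈ J, h i = 0 → ∑ i ∈ I ∩ J, h i = 0) →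
    ∃ W : Finset G, X.card ≤ W.card ∧ 1 ≤ W.card ∧ (X.card = 1 → 2 ≤ W.card) ∧ (∀ w ∈ W, w ∈ K) ∧
      (∀ w ∈ W, ∀ w' ∈ W, ∃ Z ⊆ X, ∑ i ∈ Z, h i = w - w' ∨ ∑ i ∈ Z, h i = w' - w) := by
  induction n with
  | zero =>
    intro X hX _ _ _
    have : X = ∅ := Finset.card_eq_zero.1 (by omega)
    subst this
    exact ⟨{0}, by simp, by simp, by simp, by simp, by simp⟩
  | succ n ih =>
    intro X hX hK hne hcap
    by_cases hfree : ∀ J ⊆ X, J.Nonempty → ∑ i ∈ J, h i ≠ 0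
    · obtain ⟨W, h1, h2, _, h4⟩ := chain_free h K X hK hfree
      exact ⟨W, by omega, by omega, by omega, h2, h4⟩
    · push Not at hfree
      obtain ⟨J, hJ, ⟨x, hxJ⟩, hJ0⟩ := hfree
      obtain ⟨U, hUJ, hxU, hU⟩ := exists_minZ (g := h) J.card J le_rfl hJ0 x hxJ
      have hUX := hUJ.trans hJ
      have hUcard : (U.erase x).card + 1 = U.card := Finset.card_erase_add_one hxU
      have hU2 : 2 ≤ U.card := by
        by_contra hlt
        have h1 : U.card = 1 := by omega
        obtain ⟨y, hy⟩ := Finset.card_eq_one.1 h1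
        have := hU.2.1
        rw [hy, Finset.sum_singleton] at this
        exact hne y (hUX (by simp [hy])) this
      obtain ⟨W1, a1, a2, -, a4⟩ := chain_free h K (U.erase x)
        (fun y hy => hK y (hUX (Finset.mem_of_mem_erase hy)))
        (fun J hJ hJn => hU.2.2 J (Finset.ssubset_of_subset_of_ssubset hJ
          (Finset.erase_ssubset hxU)) hJn)
      have hcard := Finset.card_sdiff_add_card_eq_card hUX
      obtain ⟨W2, b1, b2, b3, b4, b5⟩ := ih (X \ U) (by omega)
        (fun y hy => hK y (Finset.mem_sdiff.1 hy).1) (fun y hy => hne y (Finset.mem_sdiff.1 hy).1)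
        (fun I hI J hJ => hcap I (hI.trans sdiff_subset) J (hJ.trans sdiff_subset))
      -- both signs available in `U`
      have both : ∀ u ∈ W1, ∀ v ∈ W1, ∃ D ⊆ U, ∑ i ∈ D, h i = u - v := by
        intro u hu v hv
        obtain ⟨Z, hZ, hZs⟩ := a4 u hu v hv
        have hZU : Z ⊆ U := hZ.trans (Finset.erase_subset _ _)
        rcases hZs with hZs | hZs
        · exact ⟨Z, hZU, hZs⟩
        · refine ⟨U \ Z, sdiff_subset, ?_⟩
          have := Finset.sum_sdiff (f := h) hZU
          rw [hU.2.1, hZs] at this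
          rw [eq_neg_of_add_eq_zero_left this]; abel
      have inj : ∀ u ∈ W1, ∀ v ∈ W1, ∀ w ∈ W2, ∀ w' ∈ W2, u + w = v + w' → u = v ∧ w = w' := by
        intro u hu v hv w hw w' hw' heq
        obtain ⟨Z, hZ, hZs⟩ := b5 w hw w' hw'
        have hZX : Z ⊆ X := hZ.trans sdiff_subset
        have hdisj : ∀ D ⊆ U, Disjoint D Z := by
          intro D hD
          rw [Finset.disjoint_left]
          intro y hy hyZ
          exact (Finset.mem_sdiff.1 (hZ hyZ)).2 (hD hy)
        have aux : ∀ D ⊆ U, ∑ i ∈ D, h i + ∑ i ∈ Z, h i = 0 → ∑ i ∈ D, h i = 0 := by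
          intro D hD h0
          rw [← Finset.sum_union (hdisj D hD)] at h0
          have := hcap (D ∪ Z) (Finset.union_subset (hD.trans hUX) hZX) U hUX h0 hU.2.1
          have he : (D ∪ Z) ∩ U = D := by
            rw [Finset.union_inter_distrib_right, Finset.inter_eq_left.2 hD,
              Finset.disjoint_iff_inter_eq_empty.1 (hdisj U (Finset.Subset.refl _)).symm,
              Finset.union_empty]
          rwa [he] at this
        have huv : u = v := by
          rcases hZs with hZs | hZs
          · obtain ⟨D, hD, hDs⟩ := both u hu v hv
            have := aux D hD (by
              rw [hDs, hZs]
              have : u - v + (w - w') = (u + w) - (v + w') := by abel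
              rw [this, heq, sub_self])
            rw [hDs] at this
            exact sub_eq_zero.1 this
          · obtain ⟨D, hD, hDs⟩ := both v hv u hu
            have := aux D hD (by
              rw [hDs, hZs]
              have : v - u + (w' - w) = (v + w') - (u + w) := by abel
              rw [this, heq, sub_self])
            rw [hDs] at this
            exact (sub_eq_zero.1 this).symm
        refine ⟨huv, ?_⟩
        subst huv
        exact add_left_cancel heq
      have hWcard : ((W1 ×ˢ W2).image fun t : G × G => t.1 + t.2).card = U.card * W2.card := by
        rw [Finset.card_image_of_injOn, Finset.card_product, a1, hUcard]
        rintro ⟨u, w⟩ hu ⟨v, w'⟩ hv heq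
        simp only [Finset.coe_product, Set.mem_prod, Finset.mem_coe] at hu hv
        obtain ⟨r1, r2⟩ := inj u hu.1 v hv.1 w hu.2 w' hv.2 heq
        rw [r1, r2]
      refine ⟨(W1 ×ˢ W2).image (fun t : G × G => t.1 + t.2), ?_, ?_, ?_, ?_, ?_⟩
      · rw [hWcard]
        rcases Nat.lt_or_ge (X \ U).card 1 with hlt | hge
        · nlinarith
        · have : 2 ≤ W2.card := by
            rcases Nat.lt_or_ge (X \ U).card 2 with hl | hl
            · exact b3 (by omega)
            · omega
          nlinarith
      · rw [hWcard]; nlinarith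
      · intro _; rw [hWcard]; nlinarith
      · intro w hw
        simp only [Finset.mem_image, Finset.mem_product] at hw
        obtain ⟨⟨u, v⟩, ⟨hu, hv⟩, rfl⟩ := hw
        exact K.add_mem (a2 u hu) (b4 v hv)
      · intro t ht t' ht'
        simp only [Finset.mem_image, Finset.mem_product] at ht ht'
        obtain ⟨⟨u, w⟩, ⟨hu, hw⟩, rfl⟩ := ht
        obtain ⟨⟨v, w'⟩, ⟨hv, hw'⟩, rfl⟩ := ht'
        dsimp only at *
        obtain ⟨Z, hZ, hZs⟩ := b5 w hw w' hw'
        have hZX : Z ⊆ X := hZ.trans sdiff_subset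
        have hdisj : ∀ D ⊆ U, Disjoint D Z := by
          intro D hD
          rw [Finset.disjoint_left]
          intro y hy hyZ
          exact (Finset.mem_sdiff.1 (hZ hyZ)).2 (hD hy)
        rcases hZs with hZs | hZs
        · obtain ⟨D, hD, hDs⟩ := both u hu v hv
          refine ⟨D ∪ Z, Finset.union_subset (hD.trans hUX) hZX, Or.inl ?_⟩
          rw [Finset.sum_union (hdisj D hD), hDs, hZs]; abel
        · obtain ⟨D, hD, hDs⟩ := both v hv u hu
          refine ⟨D ∪ Z, Finset.union_subset (hD.trans hUX) hZX, Or.inr ?_⟩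
          rw [Finset.sum_union (hdisj D hD), hDs, hZs]; abel

end UFsec

section GRsec
set_option linter.unusedSectionVars false

/-- Abstract interface for the group algebra of `V` over `F`. -/
structure GR (F R V : Type*) [Field F] [CommRing R] [Algebra F R] [AddCommGroup V]
    [DecidableEq V] where
  X : V → R
  X_zero : X 0 = 1
  X_add : ∀ a b, X (a + b) = X a * X b
  lam : R →ₗ[F] F
  lam_X : ∀ v, lam (X v) = if v = 0 then 1 else 0
  X_span : Submodule.span F (Set.range X) = ⊤

namespace GR

variable {F R V : Type*} [Field F] [CommRing R] [Algebra F R] [AddCommGroup V] [DecidableEq V]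
variable {ι : Type*} [DecidableEq ι]

/-- The basic augmentation element. -/
def y (Γ : GR F R V) (v : V) : R := 1 - Γ.X v

/-- The augmentation ideal. -/
def I (Γ : GR F R V) : Ideal R := Ideal.span (Set.range Γ.y)

/-- Span of the monomials attached to subset sums of `P`. -/
def Sp (Γ : GR F R V) (g : ι → V) (P : Finset ι) : Submodule F R :=
  Submodule.span F {r | ∃ J ⊆ P, r = Γ.X (∑ i ∈ J, g i)}

theorem y_mem (Γ : GR F R V) (v : V) : Γ.y v ∈ Γ.I := Ideal.subset_span ⟨v, rfl⟩

theorem decomp (Γ : GR F R V) (r : R) : ∃ c : F, r - c • (1 : R) ∈ Γ.I := by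
  have hr : r ∈ Submodule.span F (Set.range Γ.X) := by rw [Γ.X_span]; trivial
  induction hr using Submodule.span_induction with
  | mem x hx =>
    obtain ⟨v, rfl⟩ := hx
    refine ⟨1, ?_⟩
    have := Γ.I.neg_mem (Γ.y_mem v)
    simpa [y] using this
  | zero => exact ⟨0, by simp⟩
  | add x z _ _ hx hz =>
    obtain ⟨c, hc⟩ := hx
    obtain ⟨d, hd⟩ := hz
    refine ⟨c + d, ?_⟩
    have := Γ.I.add_mem hc hd
    convert this using 1
    rw [add_smul]; ring
  | smul a x _ hx =>
    obtain ⟨c, hc⟩ := hx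
    refine ⟨a * c, ?_⟩
    have := Γ.I.mul_mem_left (algebraMap F R a) hc
    convert this using 1
    rw [mul_sub, ← Algebra.smul_def, ← Algebra.smul_def, smul_smul]

theorem X_mem (Γ : GR F R V) (g : ι → V) {P J : Finset ι} (h : J ⊆ P) :
    Γ.X (∑ i ∈ J, g i) ∈ Γ.Sp g P := Submodule.subset_span ⟨J, h, rfl⟩

theorem one_mem (Γ : GR F R V) (g : ι → V) (P : Finset ι) : (1 : R) ∈ Γ.Sp g P := by
  have := Γ.X_mem g (Finset.empty_subset P)
  simpa [Γ.X_zero] using this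

theorem Sp_mono (Γ : GR F R V) (g : ι → V) {P Q : Finset ι} (h : P ⊆ Q) :
    Γ.Sp g P ≤ Γ.Sp g Q :=
  Submodule.span_mono fun _ ⟨J, hJ, hr⟩ => ⟨J, hJ.trans h, hr⟩

theorem mul_mem (Γ : GR F R V) (g : ι → V) {P P' : Finset ι} (h : Disjoint P P') {a b : R}
    (ha : a ∈ Γ.Sp g P) (hb : b ∈ Γ.Sp g P') : a * b ∈ Γ.Sp g (P ∪ P') := by
  induction ha using Submodule.span_induction with
  | mem x hx =>
    obtain ⟨J, hJ, rfl⟩ := hx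
    induction hb using Submodule.span_induction with
    | mem x hx =>
      obtain ⟨J', hJ', rfl⟩ := hx
      rw [← Γ.X_add, ← Finset.sum_union (Finset.disjoint_of_subset_left hJ
        (Finset.disjoint_of_subset_right hJ' h))]
      exact Γ.X_mem g (Finset.union_subset_union hJ hJ')
    | zero => simp
    | add x z _ _ hx hz => rw [mul_add]; exact Submodule.add_mem _ hx hz
    | smul a x _ hx => rw [mul_smul_comm]; exact Submodule.smul_mem _ _ hx
  | zero => simp
  | add x z _ _ hx hz => rw [add_mul]; exact Submodule.add_mem _ hx hz
  | smul a x _ hx => rw [smul_mul_assoc]; exact Submodule.smul_mem _ _ hx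

theorem lam_mul (Γ : GR F R V) {g : ι → V} {s : Finset ι} (hs : UF s g) {P P' : Finset ι}
    (hP : P ⊆ s) (hP' : P' ⊆ s) (h0 : ∑ i ∈ P, g i = 0)
    (h : Disjoint P P') {a b : R}
    (ha : a ∈ Γ.Sp g P) (hb : b ∈ Γ.Sp g P') : Γ.lam (a * b) = Γ.lam a * Γ.lam b := by
  induction ha using Submodule.span_induction with
  | mem x hx =>
    obtain ⟨J, hJ, rfl⟩ := hx
    induction hb using Submodule.span_induction with
    | mem x hx =>
      obtain ⟨J', hJ', rfl⟩ := hx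
      have hd : Disjoint J J' := Finset.disjoint_of_subset_left hJ
        (Finset.disjoint_of_subset_right hJ' h)
      rw [← Γ.X_add, Γ.lam_X, Γ.lam_X, Γ.lam_X]
      by_cases hsum : ∑ i ∈ J, g i + ∑ i ∈ J', g i = 0
      · have h1 : ∑ i ∈ J ∪ J', g i = 0 := by rw [Finset.sum_union hd, hsum]
        have h2 := hs.inter (J ∪ J') (Finset.union_subset (hJ.trans hP) (hJ'.trans hP')) P hP h1 h0
        have he : (J ∪ J') ∩ P = J := by
          rw [Finset.union_inter_distrib_right, Finset.inter_eq_left.2 hJ,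
            Finset.disjoint_iff_inter_eq_empty.1
              (Finset.disjoint_of_subset_left hJ' h.symm), Finset.union_empty]
        rw [he] at h2
        rw [h2, zero_add] at hsum
        simp [h2, hsum]
      · rw [if_neg hsum]
        by_cases h1 : ∑ i ∈ J, g i = 0
        · have h2 : ∑ i ∈ J', g i ≠ 0 := fun h2 => hsum (by rw [h1, h2, add_zero])
          simp [h2]
        · simp [h1]
    | zero => simp
    | add x z _ _ hx hz => rw [mul_add, map_add, map_add, hx, hz, mul_add]
    | smul a x _ hx => rw [mul_smul_comm, map_smul, map_smul, hx, smul_eq_mul, smul_eq_mul]; ring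
  | zero => simp
  | add x z _ _ hx hz => rw [add_mul, map_add, map_add, hx, hz, add_mul]
  | smul a x _ hx => rw [smul_mul_assoc, map_smul, map_smul, hx, smul_eq_mul, smul_eq_mul]; ring

theorem multi (Γ : GR F R V) {g : ι → V} {s : Finset ι} (hs : UF s g)
    (B : Finset (Finset ι)) (hsub : ∀ T ∈ B, T ⊆ s) (h0 : ∀ T ∈ B, ∑ i ∈ T, g i = 0)
    (hd : ∀ T ∈ B, ∀ T' ∈ B, T ≠ T' → Disjoint T T') (E : Finset ι → R)
    (hE : ∀ T ∈ B, E T ∈ Γ.Sp g T) :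
    (∏ T ∈ B, E T) ∈ Γ.Sp g (B.biUnion id) ∧
      Γ.lam (∏ T ∈ B, E T) = ∏ T ∈ B, Γ.lam (E T) := by
  induction B using Finset.induction_on with
  | empty =>
    refine ⟨by simpa using Γ.one_mem g _, ?_⟩
    have := Γ.lam_X 0
    rw [Γ.X_zero] at this
    simpa using this
  | insert T B hT ih =>
    obtain ⟨h1, h2⟩ := ih (fun T hT => hsub T (by simp [hT])) (fun T hT => h0 T (by simp [hT]))
      (fun T hT T' hT' => hd T (by simp [hT]) T' (by simp [hT'])) (fun T hT => hE T (by simp [hT]))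
    have hdis : Disjoint T (B.biUnion id) := by
      rw [Finset.disjoint_biUnion_right]
      intro T' hT'
      refine hd T (by simp) T' (by simp [hT']) ?_
      rintro rfl
      exact hT hT'
    have hsubB : B.biUnion id ⊆ s := by
      rw [Finset.biUnion_subset]
      intro T' hT'
      exact hsub T' (by simp [hT'])
    rw [Finset.prod_insert hT, Finset.prod_insert hT, Finset.biUnion_insert]
    refine ⟨Γ.mul_mem g hdis (hE T (by simp)) h1, ?_⟩
    rw [Γ.lam_mul hs (hsub T (by simp)) hsubB (h0 T (by simp)) hdis (hE T (by simp)) h1, h2]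

theorem y_mem_Sp (Γ : GR F R V) (g : ι → V) (i : ι) : Γ.y (g i) ∈ Γ.Sp g {i} := by
  have := Γ.X_mem g (Finset.Subset.refl {i})
  rw [Finset.sum_singleton] at this
  exact Submodule.sub_mem _ (Γ.one_mem g _) this

theorem prod_mem (Γ : GR F R V) (g : ι → V) (W : Finset ι) :
    (∏ i ∈ W, Γ.y (g i)) ∈ Γ.Sp g W := by
  induction W using Finset.induction_on with
  | empty => simpa using Γ.one_mem g _
  | insert x W hx ih =>
    rw [Finset.prod_insert hx, Finset.insert_eq]
    exact Γ.mul_mem g (by simpa using hx) (Γ.y_mem_Sp g x) ih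

theorem prod_mem_I (Γ : GR F R V) (g : ι → V) (W : Finset ι) :
    (∏ i ∈ W, Γ.y (g i)) ∈ Γ.I ^ W.card := by
  induction W using Finset.induction_on with
  | empty => simp
  | insert x W hx ih =>
    rw [Finset.prod_insert hx, Finset.card_insert_of_notMem hx, pow_succ']
    exact Ideal.mul_mem_mul (Γ.y_mem _) ih

theorem lam_X_mul (Γ : GR F R V) (g : ι → V) {W : Finset ι} {v : V} {a : R}
    (h : ∀ J ⊆ W, v + ∑ i ∈ J, g i ≠ 0) (ha : a ∈ Γ.Sp g W) : Γ.lam (Γ.X v * a) = 0 := by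
  induction ha using Submodule.span_induction with
  | mem x hx =>
    obtain ⟨J, hJ, rfl⟩ := hx
    rw [← Γ.X_add, Γ.lam_X, if_neg (h J hJ)]
  | zero => simp
  | add x z _ _ hx hz => rw [mul_add, map_add, hx, hz, add_zero]
  | smul a x _ hx => rw [mul_smul_comm, map_smul, hx, smul_zero]

theorem lam_prod (Γ : GR F R V) (g : ι → V) (W : Finset ι)
    (h : ∀ J ⊆ W, J.Nonempty → ∑ i ∈ J, g i ≠ 0) : Γ.lam (∏ i ∈ W, Γ.y (g i)) = 1 := by
  induction W using Finset.induction_on with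
  | empty =>
    have := Γ.lam_X 0
    rw [Γ.X_zero] at this
    simpa using this
  | insert x W hx ih =>
    have h1 := ih fun J hJ => h J (hJ.trans (subset_insert _ _))
    rw [Finset.prod_insert hx, y, sub_mul, one_mul, map_sub, h1,
      Γ.lam_X_mul g _ (Γ.prod_mem g W), sub_zero]
    intro J hJ
    rw [← Finset.sum_insert (fun hh => hx (hJ hh))]
    exact h _ (Finset.insert_subset_insert _ hJ) ⟨x, by simp⟩

/-- The spanning lemma. -/
theorem spanning (Γ : GR F R V) {κ : Type*} [DecidableEq κ] (z : κ → R) (n : ℕ) :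
    ∀ (B : Finset κ) (ν : R →ₗ[F] F), B.card = n → (∀ r ∈ Γ.I ^ n, ν r = 0) →
    (∀ C ⊆ B, C.Nonempty → ν (∏ i ∈ C, z i) = 0) → (∀ i ∈ B, z i ∈ Γ.I) →
    (∀ i ∈ B, ∀ j ∈ B, i ≠ j → Γ.I ≤ Ideal.span {z i, z j}) → ∀ r ∈ Γ.I, ν r = 0 := by
  induction n with
  | zero =>
    intro B ν _ h _ _ _ r _
    exact h r (by simp)
  | succ n ih =>
    intro B ν hB h hC hz hp r hr
    rcases Nat.eq_zero_or_pos n with hn | hn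
    · subst hn
      exact h r (by simpa using hr)
    have key : ∀ k ∈ B, ∀ r, ν (z k * r) = 0 := by
      intro k hk
      have hI := ih (B.erase k) (ν ∘ₗ LinearMap.mulLeft F (z k))
        (by rw [Finset.card_erase_of_mem hk, hB]; rfl)
        (by
          intro r hr
          simp only [LinearMap.comp_apply, LinearMap.mulLeft_apply]
          apply h
          rw [pow_succ']
          exact Ideal.mul_mem_mul (hz k hk) hr)
        (by
          intro C hCB _
          simp only [LinearMap.comp_apply, LinearMap.mulLeft_apply]
          have hkC : k ∉ C := fun hh => by simpa using hCB hh
          rw [← Finset.prod_insert hkC]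
          refine hC _ ?_ ⟨k, by simp⟩
          rw [Finset.insert_subset_iff]
          exact ⟨hk, hCB.trans (Finset.erase_subset _ _)⟩)
        (fun i hi => hz i (Finset.mem_of_mem_erase hi))
        (fun i hi j hj => hp i (Finset.mem_of_mem_erase hi) j (Finset.mem_of_mem_erase hj))
      intro r
      obtain ⟨c, hc⟩ := Γ.decomp r
      have h1 := hI _ hc
      simp only [LinearMap.comp_apply, LinearMap.mulLeft_apply] at h1
      rw [mul_sub, mul_smul_comm, mul_one, map_sub, map_smul] at h1
      have h2 := hC {k} (by simpa using hk) (by simp)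
      rw [Finset.prod_singleton] at h2
      rw [h2, smul_zero, sub_zero] at h1
      exact h1
    obtain ⟨i, hi, j, hj, hij⟩ := Finset.one_lt_card.1 (by omega : 1 < B.card)
    obtain ⟨a, b, hab⟩ := Ideal.mem_span_pair.1 (hp i hi j hj hij hr)
    rw [← hab, map_add, mul_comm a, mul_comm b, key i hi, key j hj, add_zero]

/-- `P` supports an element of maximal order with nonzero constant coefficient. -/
def Full (Γ : GR F R V) (g : ι → V) (P : Finset ι) : Prop :=
  ∃ a ∈ Γ.Sp g P, a ∈ Γ.I ^ P.card ∧ Γ.lam a ≠ 0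

theorem Full.union {Γ : GR F R V} {g : ι → V} {s : Finset ι} (hs : UF s g) {P P' : Finset ι}
    (hP : P ⊆ s) (hP' : P' ⊆ s) (h0 : ∑ i ∈ P, g i = 0)
    (h : Disjoint P P') (h1 : Γ.Full g P) (h2 : Γ.Full g P') : Γ.Full g (P ∪ P') := by
  obtain ⟨a, ha, hai, hal⟩ := h1
  obtain ⟨b, hb, hbi, hbl⟩ := h2
  refine ⟨a * b, Γ.mul_mem g h ha hb, ?_, ?_⟩
  · rw [Finset.card_union_of_disjoint h, pow_add]
    exact Ideal.mul_mem_mul hai hbi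
  · rw [Γ.lam_mul hs hP hP' h0 h ha hb]
    exact mul_ne_zero hal hbl

theorem X_nsmul (Γ : GR F R V) (v : V) (n : ℕ) : Γ.X (n • v) = Γ.X v ^ n := by
  induction n with
  | zero => simp [Γ.X_zero]
  | succ n ih => rw [succ_nsmul, Γ.X_add, ih, pow_succ]

theorem poly_expand (t : R) (l : ℕ) : ∃ r : R,
    2 * (1 - (1 - t) ^ l) = 2 * l * t - l * (l - 1) * t ^ 2 + r * t ^ 3 := by
  induction l with
  | zero => exact ⟨0, by simp⟩
  | succ l ih =>
    obtain ⟨r, hr⟩ := ih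
    refine ⟨r * (1 - t) + l * (l - 1), ?_⟩
    have : 2 * (1 - (1 - t) ^ (l + 1)) = 2 * t + (1 - t) * (2 * (1 - (1 - t) ^ l)) := by ring
    rw [this, hr]
    push_cast
    ring

theorem atom_prod {Γ : GR F R V} {g : ι → V} {T W : Finset ι} (hT : MinZ g T) (hW : W ⊂ T) :
    Γ.lam (∏ i ∈ W, Γ.y (g i)) = 1 :=
  Γ.lam_prod g W fun J hJ hJn => hT.2.2 J (Finset.ssubset_of_subset_of_ssubset hJ hW) hJn

theorem atom_nonfull {Γ : GR F R V} {g : ι → V} {T : Finset ι} (hT : ¬ Γ.Full g T) :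
    Γ.lam (∏ i ∈ T, Γ.y (g i)) = 0 := by
  by_contra h
  exact hT ⟨_, Γ.prod_mem g T, Γ.prod_mem_I g T, h⟩

theorem pair_full {Γ : GR F R V} {g : ι → V} {s : Finset ι} (hs : UF s g) {T T' : Finset ι}
    (hTs : T ⊆ s) (hTs' : T' ⊆ s) (hT : MinZ g T) (hT' : MinZ g T') (hd : Disjoint T T')
    (hnf' : ¬ Γ.Full g T') (hne : ∀ i ∈ s, g i ≠ 0)
    {b c : ι} (hb : b ∈ T) (hc : c ∈ T') {l : ℕ} (hl : g c = l • g b) (hl0 : (l : F) ≠ 0)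
    (h2 : (2 : F) ≠ 0) : Γ.Full g (T ∪ T') := by
  have hex : ∃ b' ∈ T, b' ≠ b := by
    by_contra hcon
    push Not at hcon
    have : T = {b} := by
      ext x; constructor
      · intro hx; simpa using hcon x hx
      · intro hx; rw [Finset.mem_singleton] at hx; rwa [hx]
    have h0 := hT.2.1
    rw [this, Finset.sum_singleton] at h0
    exact hne b (hTs hb) h0
  obtain ⟨b', hb', hbb⟩ := hex
  set A := ∏ i ∈ (T.erase b').erase b, Γ.y (g i) with hA
  set A' := ∏ i ∈ T'.erase c, Γ.y (g i) with hA'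
  have hb2 : b ∈ T.erase b' := Finset.mem_erase.2 ⟨hbb.symm, hb⟩
  have hAy : Γ.y (g b) * A = ∏ i ∈ T.erase b', Γ.y (g i) := Finset.mul_prod_erase (T.erase b') (fun i => Γ.y (g i)) hb2
  have hAy' : Γ.y (g c) * A' = ∏ i ∈ T', Γ.y (g i) := Finset.mul_prod_erase T' (fun i => Γ.y (g i)) hc
  have mA : A ∈ Γ.Sp g T := Γ.Sp_mono g ((Finset.erase_subset _ _).trans (Finset.erase_subset _ _))
    (Γ.prod_mem g _)
  have mAy : Γ.y (g b) * A ∈ Γ.Sp g T := by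
    rw [hAy]; exact Γ.Sp_mono g (Finset.erase_subset _ _) (Γ.prod_mem g _)
  have mA' : A' ∈ Γ.Sp g T' := Γ.Sp_mono g (Finset.erase_subset _ _) (Γ.prod_mem g _)
  have mAy' : Γ.y (g c) * A' ∈ Γ.Sp g T' := by
    rw [hAy']; exact Γ.prod_mem g _
  have lA : Γ.lam A = 1 := atom_prod hT (Finset.ssubset_of_subset_of_ssubset
    (Finset.erase_subset _ _) (Finset.erase_ssubset hb'))
  have lAy : Γ.lam (Γ.y (g b) * A) = 1 := by
    rw [hAy]; exact atom_prod hT (Finset.erase_ssubset hb')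
  have lA' : Γ.lam A' = 1 := atom_prod hT' (Finset.erase_ssubset hc)
  have lAy' : Γ.lam (Γ.y (g c) * A') = 0 := by
    rw [hAy']; exact atom_nonfull hnf'
  have L := fun {a b : R} (ha : a ∈ Γ.Sp g T) (hb : b ∈ Γ.Sp g T') =>
    Γ.lam_mul hs hTs hTs' hT.2.1 hd ha hb
  have Mm := fun {a b : R} (ha : a ∈ Γ.Sp g T) (hb : b ∈ Γ.Sp g T') => Γ.mul_mem g hd ha hb
  refine ⟨(2 * ((l : F) - 1)) • ((Γ.y (g b) * A) * (Γ.y (g c) * A')) +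
    (4 : F) • (A * (Γ.y (g c) * A')) - (4 * (l : F)) • ((Γ.y (g b) * A) * A'), ?_, ?_, ?_⟩
  · exact Submodule.sub_mem _ (Submodule.add_mem _ (Submodule.smul_mem _ _ (Mm mAy mAy'))
      (Submodule.smul_mem _ _ (Mm mA mAy'))) (Submodule.smul_mem _ _ (Mm mAy mA'))
  · have hyc : Γ.y (g c) = 1 - (1 - Γ.y (g b)) ^ l := by
      rw [y, hl, X_nsmul]; simp [y]
    obtain ⟨r, hr⟩ := poly_expand (Γ.y (g b)) l
    rw [← hyc] at hr
    have hcard : (T ∪ T').card = ((T.erase b').erase b).card + (T'.erase c).card + 3 := by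
      rw [Finset.card_union_of_disjoint hd]
      have e1 := Finset.card_erase_add_one hb2
      have e2 := Finset.card_erase_add_one hb'
      have e3 := Finset.card_erase_add_one hc
      omega
    have heq : (2 * ((l : F) - 1)) • ((Γ.y (g b) * A) * (Γ.y (g c) * A')) +
        (4 : F) • (A * (Γ.y (g c) * A')) - (4 * (l : F)) • ((Γ.y (g b) * A) * A') =
        (A * A' * (Γ.y (g b)) ^ 3) *
          ((l - 1) * (- l * (l - 1) + r * Γ.y (g b)) + 2 * r) := by
      simp only [Algebra.smul_def, map_mul, map_sub, map_natCast, map_one, map_ofNat]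
      linear_combination (A * A' * ((l - 1) * Γ.y (g b) + 2)) * hr
    rw [heq, hcard]
    apply Ideal.mul_mem_right
    rw [pow_add, pow_add]
    exact Ideal.mul_mem_mul (Ideal.mul_mem_mul (Γ.prod_mem_I g _) (Γ.prod_mem_I g _))
      (Ideal.pow_mem_pow (Γ.y_mem _) 3)
  · rw [map_sub, map_add, map_smul, map_smul, map_smul, L mAy mAy', L mA mAy', L mAy mA', lA, lAy,
      lA', lAy']
    simp only [smul_eq_mul, mul_zero, add_zero, mul_one, zero_sub, ne_eq, neg_eq_zero]
    have : (4 : F) = 2 * 2 := by norm_num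
    rw [this]
    exact mul_ne_zero (mul_ne_zero h2 h2) hl0

theorem card_le (Γ : GR F R V) (N : ℕ) (hN : Γ.I ^ N = ⊥)
    (hpar : ∀ b c : V, b ≠ 0 → c ≠ 0 → b ≠ c → b + c ≠ 0 →
      (Γ.I ≤ Ideal.span {Γ.y b, Γ.y c}) ∨ ∃ l : ℕ, c = l • b ∧ (l : F) ≠ 0 ∧ (2 : F) ≠ 0)
    {g : ι → V} {s : Finset ι} (hs : UF s g) (hne : ∀ i ∈ s, g i ≠ 0) : s.card ≤ N + 1 := by
  classical
  by_contra hcard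
  push Not at hcard
  have hzero : ∀ n, N ≤ n → ∀ r ∈ Γ.I ^ n, r = 0 := by
    intro n hn r hr
    have := Ideal.pow_le_pow_right hn hr
    rw [hN] at this
    simpa using this
  obtain ⟨P0, hP0, hmax⟩ := Finset.exists_max_image
    (s.powerset.filter fun P => ∑ i ∈ P, g i = 0 ∧ Γ.Full g P) Finset.card
    ⟨∅, by
      simp only [mem_filter, mem_powerset, empty_subset, sum_empty, true_and]
      refine ⟨1, Γ.one_mem g _, by simp, ?_⟩
      have := Γ.lam_X 0
      rw [Γ.X_zero] at this
      simp [this]⟩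
  simp only [mem_filter, mem_powerset] at hP0 hmax
  obtain ⟨hP0s, hP00, hfull0⟩ := hP0
  have hnofull : ∀ P ⊆ s \ P0, P.Nonempty → ∑ i ∈ P, g i = 0 → ¬ Γ.Full g P := by
    intro P hP hPn hP' hf
    have hdis : Disjoint P0 P := by
      rw [Finset.disjoint_left]
      intro x hx hxP
      exact (Finset.mem_sdiff.1 (hP hxP)).2 hx
    have h1 := hmax (P0 ∪ P) ⟨Finset.union_subset hP0s (hP.trans sdiff_subset), by
      rw [Finset.sum_union hdis, hP00, hP', add_zero],
      Full.union hs hP0s (hP.trans sdiff_subset) hP00 hdis hfull0 hf⟩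
    rw [Finset.card_union_of_disjoint hdis] at h1
    have := hPn.card_pos
    omega
  obtain ⟨F0, hF0, hF0I, hF0l⟩ := hfull0
  set S1 := s \ P0 with hS1
  have hS1s : S1 ⊆ s := sdiff_subset
  have hS10 : ∑ i ∈ S1, g i = 0 := sdiff_zero hP0s hs.tot hP00
  have hcS : S1.card + P0.card = s.card := Finset.card_sdiff_add_card_eq_card hP0s
  set 𝒜 := S1.powerset.filter (MinZ g) with h𝒜
  have memA : ∀ T, T ∈ 𝒜 ↔ T ⊆ S1 ∧ MinZ g T := by intro T; simp [h𝒜]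
  have hcover : 𝒜.biUnion id = S1 := by
    ext x
    simp only [mem_biUnion, id]
    constructor
    · rintro ⟨T, hT, hx⟩
      exact ((memA T).1 hT).1 hx
    · intro hx
      obtain ⟨T, h1, h2, h3⟩ := exists_minZ S1.card S1 le_rfl hS10 x hx
      exact ⟨T, (memA T).2 ⟨h1, h3⟩, h2⟩
  have hdisj : ∀ T ∈ 𝒜, ∀ T' ∈ 𝒜, T ≠ T' → Disjoint T T' := by
    intro T hT T' hT' hn
    have h1 := (memA T).1 hT
    have h2 := (memA T').1 hT'
    exact MinZ.disj hs h1.2 h2.2 (h1.1.trans hS1s) (h2.1.trans hS1s) hn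
  have hsum : ∑ T ∈ 𝒜, T.card = S1.card := by
    rw [← hcover, Finset.card_biUnion]
    · rfl
    · exact fun T hT T' hT' hn => hdisj T hT T' hT' hn
  have hpair : ∀ T ∈ 𝒜, ∀ T' ∈ 𝒜, T ≠ T' → ∀ b ∈ T, ∀ c ∈ T',
      Γ.I ≤ Ideal.span {Γ.y (g b), Γ.y (g c)} := by
    intro T hT T' hT' hn b hb c hc
    have h1 := (memA T).1 hT
    have h2 := (memA T').1 hT'
    have hd := hdisj T hT T' hT' hn
    have hTs := h1.1.trans hS1s
    have hTs' := h2.1.trans hS1s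
    have hcT : c ∉ T := fun hh => (Finset.disjoint_left.1 hd) hh hc
    have hbc : b ≠ c := by rintro rfl; exact hcT hb
    have hq1 : g b ≠ g c := by
      intro heq
      have hcE : c ∉ T.erase b := fun hh => hcT (Finset.mem_of_mem_erase hh)
      have e1 : ∑ i ∈ insert c (T.erase b), g i = 0 := by
        rw [Finset.sum_insert hcE, ← heq, Finset.add_sum_erase _ _ hb, h1.2.2.1]
      have e2 := hs.inter (insert c (T.erase b)) (by
        rw [Finset.insert_subset_iff]
        exact ⟨hTs' hc, (Finset.erase_subset _ _).trans hTs⟩) T hTs e1 h1.2.2.1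
      have e3 : insert c (T.erase b) ∩ T = T.erase b := by
        rw [Finset.insert_inter_of_notMem hcT, Finset.inter_eq_left]
        exact Finset.erase_subset _ _
      rw [e3] at e2
      have e4 := Finset.add_sum_erase T g hb
      rw [e2, h1.2.2.1, add_zero] at e4
      exact hne b (hTs hb) e4
    have hq2 : g b + g c ≠ 0 := by
      intro heq
      have e1 : ∑ i ∈ ({b, c} : Finset ι), g i = 0 := by
        rw [Finset.sum_pair hbc, heq]
      have e2 := hs.inter {b, c} (by
        intro x hx
        simp only [mem_insert, mem_singleton] at hx
        rcases hx with rfl | rfl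
        · exact hTs hb
        · exact hTs' hc) T hTs e1 h1.2.2.1
      have e3 : ({b, c} : Finset ι) ∩ T = {b} := by
        rw [Finset.insert_inter_of_mem hb, Finset.singleton_inter_of_notMem hcT]
        simp
      rw [e3, Finset.sum_singleton] at e2
      exact hne b (hTs hb) e2
    rcases hpar (g b) (g c) (hne b (hTs hb)) (hne c (hTs' hc)) hq1 hq2 with h | ⟨l, hl, hl0, hl2⟩
    · exact h
    · exfalso
      refine hnofull (T ∪ T') (Finset.union_subset h1.1 h2.1) ⟨b, by simp [hb]⟩ ?_ ?_
      · rw [Finset.sum_union hd, h1.2.2.1, h2.2.2.1, add_zero]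
      · exact pair_full hs hTs hTs' h1.2 h2.2 hd (hnofull T' h2.1 ⟨c, hc⟩ h2.2.2.1) hne hb hc hl
          hl0 hl2
  rcases S1.eq_empty_or_nonempty with hemp | ⟨x, hx⟩
  · apply hF0l
    rw [hzero P0.card (by rw [hemp] at hcS; simp at hcS; omega) F0 hF0I, map_zero]
  obtain ⟨T1, hT1S, hxT1, hT1⟩ := exists_minZ S1.card S1 le_rfl hS10 x hx
  have hT1A : T1 ∈ 𝒜 := (memA T1).2 ⟨hT1S, hT1⟩
  have hT1s := hT1S.trans hS1s
  have hex : ∃ x' ∈ T1, x' ≠ x := by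
    by_contra hcon
    push Not at hcon
    have : T1 = {x} := by
      ext z; constructor
      · intro hz; simpa using hcon z hz
      · intro hz; rw [Finset.mem_singleton] at hz; rwa [hz]
    have h0 := hT1.2.1
    rw [this, Finset.sum_singleton] at h0
    exact hne x (hT1s hxT1) h0
  obtain ⟨x', hx', hxx⟩ := hex
  set ℬ := 𝒜.erase T1 with hℬ
  have hBA : ∀ T ∈ ℬ, T ∈ 𝒜 := fun T hT => Finset.mem_of_mem_erase hT
  have hpick : ∀ T : Finset ι, ∃ b : ι, T ∈ ℬ → b ∈ T := by
    intro T
    by_cases h : T ∈ ℬ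
    · obtain ⟨b, hb⟩ := ((memA T).1 (hBA T h)).2.1
      exact ⟨b, fun _ => hb⟩
    · exact ⟨x, fun hh => absurd hh h⟩
  choose pk hpk using hpick
  set A1 := ∏ i ∈ (T1.erase x').erase x, Γ.y (g i) with hA1
  have hx2 : x ∈ T1.erase x' := Finset.mem_erase.2 ⟨hxx.symm, hxT1⟩
  have hA1y : Γ.y (g x) * A1 = ∏ i ∈ T1.erase x', Γ.y (g i) := Finset.mul_prod_erase (T1.erase x') (fun i => Γ.y (g i)) hx2
  have mA1 : A1 ∈ Γ.Sp g T1 := Γ.Sp_mono g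
    ((Finset.erase_subset _ _).trans (Finset.erase_subset _ _)) (Γ.prod_mem g _)
  have mA1y : Γ.y (g x) * A1 ∈ Γ.Sp g T1 := by
    rw [hA1y]; exact Γ.Sp_mono g (Finset.erase_subset _ _) (Γ.prod_mem g _)
  have lA1y : Γ.lam (Γ.y (g x) * A1) = 1 := by
    rw [hA1y]; exact atom_prod hT1 (Finset.erase_ssubset hx')
  let AA : Finset ι → R := fun T => ∏ i ∈ T.erase (pk T), Γ.y (g i)
  let z : Finset ι → R := fun T => Γ.y (g (pk T))
  set M := F0 * A1 * ∏ T ∈ ℬ, AA T with hM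
  -- evaluation
  have hBs : ℬ.biUnion id ⊆ s := by
    rw [Finset.biUnion_subset]
    intro T hT
    exact ((memA T).1 (hBA T hT)).1.trans hS1s
  have hT1B : Disjoint T1 (ℬ.biUnion id) := by
    rw [Finset.disjoint_biUnion_right]
    intro T hT
    exact hdisj T1 hT1A T (hBA T hT) (Finset.ne_of_mem_erase hT).symm
  have hP0B : Disjoint P0 (T1 ∪ ℬ.biUnion id) := by
    rw [Finset.disjoint_left]
    intro w hw hw2
    rcases Finset.mem_union.1 hw2 with h | h
    · exact (Finset.mem_sdiff.1 (hT1S h)).2 hw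
    · obtain ⟨T, hT, hwT⟩ := Finset.mem_biUnion.1 h
      exact (Finset.mem_sdiff.1 (((memA T).1 (hBA T hT)).1 hwT)).2 hw
  have heval : ∀ (Q : R) (E : Finset ι → R), Q ∈ Γ.Sp g T1 → (∀ T ∈ ℬ, E T ∈ Γ.Sp g T) →
      Γ.lam (F0 * (Q * ∏ T ∈ ℬ, E T)) = Γ.lam F0 * (Γ.lam Q * ∏ T ∈ ℬ, Γ.lam (E T)) := by
    intro Q E hQ hE
    obtain ⟨m1, m2⟩ := Γ.multi hs ℬ (fun T hT => ((memA T).1 (hBA T hT)).1.trans hS1s)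
      (fun T hT => ((memA T).1 (hBA T hT)).2.2.1)
      (fun T hT T' hT' => hdisj T (hBA T hT) T' (hBA T' hT')) E hE
    rw [Γ.lam_mul hs hP0s (Finset.union_subset hT1s hBs) hP00 hP0B hF0 (Γ.mul_mem g hT1B hQ m1),
      Γ.lam_mul hs hT1s hBs hT1.2.1 hT1B hQ m1, m2]
  have mAA : ∀ T ∈ ℬ, AA T ∈ Γ.Sp g T := fun T _ =>
    Γ.Sp_mono g (Finset.erase_subset _ _) (Γ.prod_mem g _)
  have mAz : ∀ T ∈ ℬ, z T * AA T = ∏ i ∈ T, Γ.y (g i) := fun T hT =>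
    Finset.mul_prod_erase T (fun i => Γ.y (g i)) (hpk T hT)
  have lAA : ∀ T ∈ ℬ, Γ.lam (AA T) = 1 := fun T hT =>
    atom_prod ((memA T).1 (hBA T hT)).2 (Finset.erase_ssubset (hpk T hT))
  -- degree
  have hMI : M ∈ Γ.I ^ (P0.card + ((T1.erase x').erase x).card +
      ∑ T ∈ ℬ, (T.erase (pk T)).card) := by
    rw [hM, pow_add, pow_add]
    refine Ideal.mul_mem_mul (Ideal.mul_mem_mul hF0I (Γ.prod_mem_I g _)) ?_
    rw [← Finset.prod_pow_eq_pow_sum]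
    exact Ideal.prod_mem_prod fun T _ => Γ.prod_mem_I g _
  have hdeg : P0.card + ((T1.erase x').erase x).card +
      ∑ T ∈ ℬ, (T.erase (pk T)).card + ℬ.card + 2 = s.card := by
    have e1 := Finset.card_erase_add_one hx2
    have e2 := Finset.card_erase_add_one hx'
    have e3 : ∑ T ∈ ℬ, (T.erase (pk T)).card + ℬ.card = ∑ T ∈ ℬ, T.card := by
      rw [Finset.card_eq_sum_ones, ← Finset.sum_add_distrib]
      exact Finset.sum_congr rfl fun T hT => Finset.card_erase_add_one (hpk T hT)
    have e4 := Finset.add_sum_erase 𝒜 Finset.card hT1A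
    rw [hsum] at e4
    have e5 : ∑ T ∈ ℬ, T.card = ∑ T ∈ 𝒜.erase T1, T.card := rfl
    omega
  have hfin := Γ.spanning z ℬ.card ℬ (Γ.lam ∘ₗ LinearMap.mulLeft F M) rfl
    (by
      intro r hr
      simp only [LinearMap.comp_apply, LinearMap.mulLeft_apply]
      rw [hzero _ _ (M * r) (by
        have := Ideal.mul_mem_mul hMI hr
        rwa [← pow_add] at this), map_zero]
      omega)
    (by
      intro C hC ⟨T0, hT0⟩
      simp only [LinearMap.comp_apply, LinearMap.mulLeft_apply]
      have e1 : ∏ T ∈ C, z T = ∏ T ∈ ℬ, if T ∈ C then z T else 1 := by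
        rw [Finset.prod_ite_mem, Finset.inter_eq_right.2 hC]
      have e2 : M * ∏ T ∈ C, z T =
          F0 * (A1 * ∏ T ∈ ℬ, (if T ∈ C then z T else 1) * AA T) := by
        rw [e1, Finset.prod_mul_distrib, hM]; ring
      rw [e2, heval _ _ mA1]
      · have : ∏ T ∈ ℬ, Γ.lam ((if T ∈ C then z T else 1) * AA T) = 0 := by
          refine Finset.prod_eq_zero (hC hT0) ?_
          rw [if_pos hT0, mAz T0 (hC hT0)]
          have h1 := (memA T0).1 (hBA T0 (hC hT0))
          exact atom_nonfull (hnofull T0 h1.1 h1.2.1 h1.2.2.1)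
        rw [this, mul_zero, mul_zero]
      · intro T hT
        by_cases hTC : T ∈ C
        · rw [if_pos hTC, mAz T hT]; exact Γ.prod_mem g _
        · rw [if_neg hTC, one_mul]; exact mAA T hT)
    (fun T _ => Γ.y_mem _)
    (fun T hT T' hT' hn => hpair T (hBA T hT) T' (hBA T' hT') hn _ (hpk T hT) _ (hpk T' hT'))
    (Γ.y (g x)) (Γ.y_mem _)
  simp only [LinearMap.comp_apply, LinearMap.mulLeft_apply] at hfin
  have e2 : M * Γ.y (g x) = F0 * ((Γ.y (g x) * A1) * ∏ T ∈ ℬ, AA T) := by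
    rw [hM]; ring
  rw [e2, heval _ _ mA1y mAA, lA1y, Finset.prod_congr rfl lAA] at hfin
  simp at hfin
  exact hF0l hfin

end GR
end GRsec

section Inst

theorem zmod_two_one : ∀ t : ZMod 2, t ≠ 0 → t = 1 := by decide

theorem ideal_pow_zero {R : Type*} [CommRing R] (u v : R) (n : ℕ) (hu : u ^ n = 0)
    (hv : v ^ n = 0) : (Ideal.span {u, v}) ^ (2 * n - 1) = ⊥ := by
  have h : Ideal.span {u, v} = Ideal.span {u} + Ideal.span {v} := by
    rw [Ideal.span_insert]; rfl
  rw [h, add_pow]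
  refine Finset.sum_eq_zero fun m hm => ?_
  rw [Finset.mem_range] at hm
  rw [Ideal.span_singleton_pow, Ideal.span_singleton_pow]
  rcases le_or_gt n m with h1 | h1
  · rw [pow_eq_zero_of_le h1 hu]; simp
  · rw [pow_eq_zero_of_le (show n ≤ 2 * n - 1 - m by omega) hv]; simp

variable (q : ℕ) [hq : Fact q.Prime]

/-- The group algebra of `C_q ⊕ C_q` over the field with `q` elements. -/
noncomputable def grq : GR (ZMod q) (AddMonoidAlgebra (ZMod q) (ZMod q × ZMod q))
    (ZMod q × ZMod q) where
  X v := AddMonoidAlgebra.single v 1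
  X_zero := rfl
  X_add a b := by simp [AddMonoidAlgebra.single_mul_single]
  lam := { toFun := fun f => f.coeff 0, map_add' := fun _ _ => rfl,
           map_smul' := fun _ _ => rfl }
  lam_X v := by
    change (AddMonoidAlgebra.single v (1 : ZMod q)).coeff 0 = _
    rw [AddMonoidAlgebra.coeff_single, Finsupp.single_apply]
  X_span := by
    rw [eq_top_iff]
    intro f _
    induction f using AddMonoidAlgebra.induction_linear with
    | zero => exact Submodule.zero_mem _
    | add f g hf hg => exact Submodule.add_mem _ (hf trivial) (hg trivial)
    | single a b =>
      have : AddMonoidAlgebra.single a b = b • AddMonoidAlgebra.single a (1 : ZMod q) := by simp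
      rw [this]
      exact Submodule.smul_mem _ _ (Submodule.subset_span ⟨a, rfl⟩)

theorem grq_y_pow (v : ZMod q × ZMod q) : (grq q).y v ^ q = 0 := by
  have : CharP (AddMonoidAlgebra (ZMod q) (ZMod q × ZMod q)) q :=
    charP_of_injective_algebraMap (algebraMap (ZMod q) _).injective q
  have e : q • v = 0 := by ext <;> simp
  rw [GR.y, sub_pow_char, one_pow, ← GR.X_nsmul, e, GR.X_zero, sub_self]

/-- If `b` and `c` generate, the augmentation ideal is generated by two elements. -/
theorem grq_gen (b c : ZMod q × ZMod q)
    (h : ∀ v : ZMod q × ZMod q, ∃ i j : ℕ, v = i • b + j • c) :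
    (grq q).I ≤ Ideal.span {(grq q).y b, (grq q).y c} := by
  rw [GR.I, Ideal.span_le]
  rintro _ ⟨v, rfl⟩
  obtain ⟨i, j, rfl⟩ := h v
  have hb : (grq q).y b ∈ Ideal.span {(grq q).y b, (grq q).y c} := Ideal.subset_span (by simp)
  have hc : (grq q).y c ∈ Ideal.span {(grq q).y b, (grq q).y c} := Ideal.subset_span (by simp)
  have h1 : (grq q).y b ∣ 1 - (grq q).X b ^ i := by
    have := sub_dvd_pow_sub_pow 1 ((grq q).X b) i
    rwa [one_pow] at this
  have h2 : (grq q).y c ∣ 1 - (grq q).X c ^ j := by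
    have := sub_dvd_pow_sub_pow 1 ((grq q).X c) j
    rwa [one_pow] at this
  have e : (grq q).y (i • b + j • c) = (1 - (grq q).X b ^ i) +
      (grq q).X b ^ i * (1 - (grq q).X c ^ j) := by
    rw [GR.y, GR.X_add, GR.X_nsmul, GR.X_nsmul]; ring
  rw [SetLike.mem_coe, e]
  exact Ideal.add_mem _ (Ideal.mem_of_dvd _ h1 hb) (Ideal.mul_mem_left _ _ (Ideal.mem_of_dvd _ h2 hc))

theorem qq_gen (b c : ZMod q × ZMod q) (h : b.1 * c.2 - b.2 * c.1 ≠ 0) (v : ZMod q × ZMod q) :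
    ∃ i j : ℕ, v = i • b + j • c := by
  set d := b.1 * c.2 - b.2 * c.1 with hd
  refine ⟨((v.1 * c.2 - v.2 * c.1) / d).val, ((b.1 * v.2 - b.2 * v.1) / d).val, ?_⟩
  ext
  · simp
    field_simp
    rw [hd]; ring
  · simp
    field_simp
    rw [hd]; ring

theorem qq_card_le {ι : Type*} [DecidableEq ι] {g : ι → ZMod q × ZMod q} {s : Finset ι}
    (hs : UF s g) (hne : ∀ i ∈ s, g i ≠ 0) : s.card ≤ 2 * q := by
  have hq2 := hq.out.two_le
  have hI : (grq q).I ^ (2 * q - 1) = ⊥ := by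
    have h1 := grq_gen q (1, 0) (0, 1) (qq_gen q (1, 0) (0, 1) (by simp))
    rw [eq_bot_iff]
    refine (Ideal.pow_right_mono h1 _).trans (le_of_eq ?_)
    exact ideal_pow_zero _ _ _ (grq_y_pow q _) (grq_y_pow q _)
  have := GR.card_le (grq q) (2 * q - 1) hI ?_ hs hne
  · omega
  · intro b c hb hc hbc hbc'
    by_cases hd : b.1 * c.2 - b.2 * c.1 = 0
    · right
      have : ∃ t : ZMod q, c = (t * b.1, t * b.2) := by
        by_cases hb1 : b.1 = 0
        · have hb2 : b.2 ≠ 0 := fun h => hb (Prod.ext hb1 h)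
          have hc1 : c.1 = 0 := by
            rw [hb1, zero_mul, zero_sub, neg_eq_zero] at hd
            exact (mul_eq_zero.1 hd).resolve_left hb2
          refine ⟨c.2 / b.2, Prod.ext ?_ ?_⟩
          · simp [hb1, hc1]
          · simp [hb2]
        · refine ⟨c.1 / b.1, Prod.ext ?_ ?_⟩
          · simp [hb1]
          · simp only
            field_simp
            linear_combination hd
      obtain ⟨t, ht⟩ := this
      have ht0 : t ≠ 0 := by
        rintro rfl
        exact hc (by rw [ht]; simp)
      refine ⟨t.val, ?_, by simpa using ht0, ?_⟩
      · rw [ht]; ext <;> simp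
      · intro h2
        apply hbc
        have : t = 1 := by
          have hq' : q = 2 := by
            have : ((2 : ℕ) : ZMod q) = 0 := by exact_mod_cast h2
            rw [ZMod.natCast_eq_zero_iff] at this
            exact (Nat.prime_dvd_prime_iff_eq hq.out Nat.prime_two).1 this
          subst hq'
          exact zmod_two_one t ht0
        rw [ht, this]; simp
    · exact Or.inl (grq_gen q b c (qq_gen q b c hd))

end Inst

section Upper
set_option linter.unusedSectionVars false
variable {ι : Type*} [DecidableEq ι] {G : Type*} [AddCommGroup G]

/-- Cross number of a subfamily. -/
noncomputable def cr (s : Finset ι) (g : ι → G) : ℝ := ∑ i ∈ s, (1 : ℝ) / (addOrderOf (g i) : ℝ)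

theorem cr_sdiff {s D : Finset ι} (g : ι → G) (h : D ⊆ s) : cr s g = cr (s \ D) g + cr D g :=
  (Finset.sum_sdiff h).symm

theorem cr_merge {s : Finset ι} (g : ι → G) {d : ι} (v : G) (h : d ∉ s) :
    cr (insert d s) (Function.update g d v) = cr s g + 1 / (addOrderOf v : ℝ) := by
  unfold cr
  rw [Finset.sum_insert h, Function.update_self, add_comm]
  congr 1
  refine Finset.sum_congr rfl fun x hx => ?_
  rw [Function.update_of_ne]
  rintro rfl
  exact h hx

theorem cr_le {s : Finset ι} (g : ι → G) {n c : ℕ} (hn : 0 < n) (hc : s.card ≤ c)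
    (h : ∀ x ∈ s, n ≤ addOrderOf (g x)) : cr s g ≤ (c : ℝ) / n := by
  have h1 : cr s g ≤ ∑ _i ∈ s, (1 : ℝ) / n := by
    refine Finset.sum_le_sum fun x hx => ?_
    have := h x hx
    gcongr
  rw [Finset.sum_const, nsmul_eq_mul] at h1
  refine h1.trans ?_
  rw [mul_one_div]
  gcongr

theorem inv_ord_ge {v : G} {n : ℕ} (hn : 0 < n) (h : n • v = 0) :
    (1 : ℝ) / n ≤ 1 / (addOrderOf v : ℝ) := by
  have h1 := addOrderOf_dvd_of_nsmul_eq_zero h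
  have h2 := Nat.le_of_dvd hn h1
  have h3 : 0 < addOrderOf v := Nat.pos_of_dvd_of_pos h1 hn
  gcongr

theorem ord_cases {p q j n : ℕ} (hp : p.Prime) (hq : q.Prime) (h1 : n ∣ p ^ (j + 1) * q)
    (h2 : ¬ n ∣ p ^ j * q) : n = p ^ (j + 1) ∨ n = p ^ (j + 1) * q := by
  obtain ⟨a, b, ha, hb, rfl⟩ := (Nat.dvd_mul).1 h1
  obtain ⟨i, hi, rfl⟩ := (Nat.dvd_prime_pow hp).1 ha
  have : i = j + 1 := by
    by_contra hne
    exact h2 (Nat.mul_dvd_mul (pow_dvd_pow _ (by omega)) hb)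
  subst this
  rcases (Nat.dvd_prime hq).1 hb with rfl | rfl
  · left; simp
  · right; rfl

theorem kill_gcd {v : G} {a b : ℕ} (ha : a • v = 0) (hb : b • v = 0) : (Nat.gcd a b) • v = 0 := by
  rw [← addOrderOf_dvd_iff_nsmul_eq_zero] at *
  exact Nat.dvd_gcd ha hb

/-- Collapsing (or deleting) a set `E` of bad indices. -/
theorem collapse {M : ℕ} {β : ℝ}
    (hUB : ∀ (s : Finset ι) (g : ι → G), UF s g → (∀ x ∈ s, g x ≠ 0) → (∀ x ∈ s, M • g x = 0) →
      cr s g ≤ β) {s E : Finset ι} {g : ι → G} (hs : UF s g) (hE : E ⊆ s)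
    (hne : ∀ x ∈ s \ E, g x ≠ 0) (hM : ∀ x ∈ s \ E, M • g x = 0) (hME : M • ∑ i ∈ E, g i = 0) :
    cr (s \ E) g ≤ β := by
  by_cases h0 : ∑ i ∈ E, g i = 0
  · exact hUB _ _ (hs.sdiff hE h0) hne hM
  · have hEn : E.Nonempty := by
      by_contra hcon
      rw [Finset.not_nonempty_iff_eq_empty] at hcon
      exact h0 (by rw [hcon, Finset.sum_empty])
    obtain ⟨e, he⟩ := hEn
    have hes : e ∉ s \ E := by simp [he]
    have hval : ∀ x ∈ s \ E, Function.update g e (∑ i ∈ E, g i) x = g x := by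
      intro x hx
      rw [Function.update_of_ne]
      rintro rfl
      exact hes hx
    have := hUB _ _ (hs.merge hE he) (by
      intro x hx
      rcases Finset.mem_insert.1 hx with rfl | hx
      · rwa [Function.update_self]
      · rw [hval x hx]; exact hne x hx) (by
      intro x hx
      rcases Finset.mem_insert.1 hx with rfl | hx
      · rwa [Function.update_self]
      · rw [hval x hx]; exact hM x hx)
    rw [cr_merge _ _ hes] at this
    have h1 : (0 : ℝ) ≤ 1 / (addOrderOf (∑ i ∈ E, g i) : ℝ) := by positivity
    linarith

theorem free_zero [DecidableEq G] {p : ℕ} (φ : G →+ G)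
    (K : AddSubgroup G) (hφ : ∀ W : Finset G, (∀ w ∈ W, w ∈ K) → W.card ≤ p)
    (g : ι → G) (C : Finset ι) (hgK : ∀ x ∈ C, φ (g x) ∈ K)
    (hsmall : ∀ D ⊆ C, D.card ≤ p → φ (∑ i ∈ D, g i) = 0 → ∑ i ∈ D, g i = 0) (n : ℕ) :
    ∀ D ⊆ C, D.card ≤ n → φ (∑ i ∈ D, g i) = 0 → ∑ i ∈ D, g i = 0 := by
  induction n with
  | zero => exact fun D hD hc => hsmall D hD (by omega)
  | succ n ih =>
    intro D hD hc h0
    rcases le_or_gt D.card p with hle | hgt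
    · exact hsmall D hD hle h0
    · obtain ⟨x, hx⟩ : D.Nonempty := Finset.card_pos.1 (by omega)
      have hcx := Finset.card_erase_add_one hx
      have hex : ∃ J ⊆ D.erase x, J.Nonempty ∧ ∑ i ∈ J, φ (g i) = 0 := by
        by_contra hcon
        push Not at hcon
        obtain ⟨W, h1, h2, -, -⟩ := chain_free (fun i => φ (g i)) K (D.erase x)
          (fun y hy => hgK y (hD (Finset.mem_of_mem_erase hy))) hcon
        have := hφ W h2
        omega
      obtain ⟨J, hJ, hJn, hJ0⟩ := hex
      have hJD : J ⊆ D := hJ.trans (Finset.erase_subset _ _)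
      have hcJ := Finset.card_le_card hJ
      have hcJ0 := hJn.card_pos
      have hcD := Finset.card_sdiff_add_card_eq_card hJD
      rw [← map_sum] at hJ0
      have e := Finset.sum_sdiff (f := g) hJD
      have e1 := ih J (hJD.trans hD) (by omega) hJ0
      have e2 := ih (D \ J) (sdiff_subset.trans hD) (by omega) (by
        rw [← e, map_add, hJ0, add_zero] at h0; exact h0)
      rw [← e, e1, e2, add_zero]

theorem prod_bound [DecidableEq G] {p : ℕ} (φ : G →+ G)
    (K : AddSubgroup G) (hφ : ∀ W : Finset G, (∀ w ∈ W, w ∈ K) → W.card ≤ p)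
    {g : ι → G} {s C : Finset ι} (hgK : ∀ x ∈ C, φ (g x) ∈ K) (hs : UF s g) (hC : C ⊆ s) (hne : ∀ x ∈ C, φ (g x) ≠ 0)
    (h0 : ∀ D ⊆ C, φ (∑ i ∈ D, g i) = 0 → ∑ i ∈ D, g i = 0) : C.card ≤ p := by
  obtain ⟨W, h1, -, -, h2, -⟩ := chain_prod (fun i => φ (g i)) K C.card C le_rfl
    hgK hne (by
      intro I hI J hJ hI0 hJ0
      rw [← map_sum] at hI0 hJ0 ⊢
      rw [hs.inter I (hI.trans hC) J (hJ.trans hC) (h0 I hI hI0) (h0 J hJ hJ0), map_zero])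
  exact h1.trans (hφ W h2)

theorem upper (p q : ℕ) (hp : p.Prime) (hq : q.Prime) (hpq : p ≠ q)
    (hK : ∀ W : Finset G, (∀ w ∈ W, p • w = 0) → W.card ≤ p)
    (hbase : ∀ (s : Finset ι) (g : ι → G), UF s g → (∀ x ∈ s, g x ≠ 0) →
      (∀ x ∈ s, q • g x = 0) → s.card ≤ 2 * q) (j : ℕ) :
    ∀ (s : Finset ι) (g : ι → G), UF s g → (∀ x ∈ s, g x ≠ 0) → (∀ x ∈ s, (p ^ j * q) • g x = 0) →
      cr s g ≤ ∑ k ∈ Finset.range j, (1 : ℝ) / (p : ℝ) ^ k + 2 := by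
  classical
  have hq0 : (0 : ℝ) < q := by exact_mod_cast hq.pos
  have hp0 : (0 : ℝ) < p := by exact_mod_cast hp.pos
  have hcop : Nat.Coprime p q := (Nat.coprime_primes hp hq).2 hpq
  induction j with
  | zero =>
    intro s g hs hne hk
    simp only [pow_zero, one_mul] at hk
    have hc := hbase s g hs hne hk
    have := cr_le g hq.pos hc (fun x hx => by
      rw [addOrderOf_eq_prime (hp := ⟨hq⟩) (hk x hx) (hne x hx)])
    push_cast at this
    rw [mul_div_assoc, div_self hq0.ne'] at this
    simpa using this
  | succ j ih =>
    suffices H : ∀ n : ℕ, ∀ (s : Finset ι) (g : ι → G), s.card ≤ n → UF s g → (∀ x ∈ s, g x ≠ 0) →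
        (∀ x ∈ s, (p ^ (j + 1) * q) • g x = 0) →
        cr s g ≤ ∑ k ∈ Finset.range (j + 1), (1 : ℝ) / (p : ℝ) ^ k + 2 from
      fun s g => H s.card s g le_rfl
    intro n
    induction n with
    | zero =>
      intro s g hc _ _ _
      have : s = ∅ := Finset.card_eq_zero.1 (by omega)
      subst this
      simp only [cr, Finset.sum_empty]
      positivity
    | succ n ihn =>
      intro s g hcard hs hne hk
      let φ : G →+ G := nsmulAddMonoidHom (p ^ j * q)
      have hφe : ∀ v, φ v = (p ^ j * q) • v := fun v => rfl
      set X := s.filter (fun x => φ (g x) ≠ 0) with hX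
      set A := X.filter (fun x => p ^ (j + 1) • g x = 0) with hA
      set B := X.filter (fun x => ¬ p ^ (j + 1) • g x = 0) with hB
      have hXs : X ⊆ s := Finset.filter_subset _ _
      have hAX : A ⊆ X := Finset.filter_subset _ _
      have hBX : B ⊆ X := Finset.filter_subset _ _
      have hXφ : ∀ x ∈ X, φ (g x) ≠ 0 := fun x hx => (Finset.mem_filter.1 hx).2
      have hord : ∀ x ∈ X, addOrderOf (g x) = p ^ (j + 1) ∨
          addOrderOf (g x) = p ^ (j + 1) * q := by
        intro x hx
        refine ord_cases hp hq (addOrderOf_dvd_of_nsmul_eq_zero (hk x (hXs hx))) ?_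
        rw [addOrderOf_dvd_iff_nsmul_eq_zero]
        exact hXφ x hx
      have hordA : ∀ x ∈ A, p ^ (j + 1) * 1 ≤ addOrderOf (g x) := by
        intro x hx
        rcases hord x (hAX hx) with h | h
        · rw [h, mul_one]
        · rw [h]; exact Nat.mul_le_mul_left _ hq.pos
      have hordB : ∀ x ∈ B, p ^ (j + 1) * q ≤ addOrderOf (g x) := by
        intro x hx
        rcases hord x (hBX hx) with h | h
        · exfalso
          apply (Finset.mem_filter.1 hx).2
          rw [← h]; exact addOrderOf_nsmul_eq_zero _
        · rw [h]
      have hφX : φ (∑ i ∈ X, g i) = 0 := by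
        have e := Finset.sum_sdiff (f := g) hXs
        have e2 : φ (∑ i ∈ s \ X, g i) = 0 := by
          rw [map_sum]
          refine Finset.sum_eq_zero fun x hx => ?_
          by_contra hcon
          exact (Finset.mem_sdiff.1 hx).2 (Finset.mem_filter.2 ⟨(Finset.mem_sdiff.1 hx).1, hcon⟩)
        rw [hs.tot] at e
        have e3 := congrArg φ e
        rw [map_add, e2, zero_add, map_zero] at e3
        exact e3
      let K : AddSubgroup G := (nsmulAddMonoidHom (α := G) p).ker
      have hKφ : ∀ W : Finset G, (∀ w ∈ W, w ∈ K) → W.card ≤ p := fun W hW => hK W hW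
      have hgK : ∀ x ∈ s, φ (g x) ∈ K := by
        intro x hx
        change p • ((p ^ j * q) • g x) = 0
        rw [← mul_nsmul', ← mul_assoc, ← pow_succ']
        exact hk x hx
      -- merging inside a single order class
      have case1 : ∀ (C : Finset ι) (N : ℕ), 0 < N → C ⊆ X →
          (∀ x ∈ C, p ^ (j + 1) * N ≤ addOrderOf (g x)) →
          (∀ D ⊆ C, φ (∑ i ∈ D, g i) = 0 → (p ^ j * N) • (∑ i ∈ D, g i) = 0) →
          (∃ D ⊆ C, D.card ≤ p ∧ φ (∑ i ∈ D, g i) = 0 ∧ ∑ i ∈ D, g i ≠ 0) →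
          cr s g ≤ ∑ k ∈ Finset.range (j + 1), (1 : ℝ) / (p : ℝ) ^ k + 2 := by
        rintro C N hN hCX hCo hCk ⟨D, hDC, hDp, hDφ, hD0⟩
        have hDX := hDC.trans hCX
        have hDs := hDX.trans hXs
        have hDn : D.Nonempty := by
          by_contra hcon
          rw [Finset.not_nonempty_iff_eq_empty] at hcon
          exact hD0 (by rw [hcon, Finset.sum_empty])
        have hD2 : 2 ≤ D.card := by
          by_contra hlt
          have h1 : D.card = 1 := by have := hDn.card_pos; omega
          obtain ⟨y, hy⟩ := Finset.card_eq_one.1 h1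
          rw [hy, Finset.sum_singleton] at hDφ
          exact hXφ y (hDX (by simp [hy])) hDφ
        obtain ⟨d, hd⟩ := hDn
        have hds : d ∉ s \ D := by simp [hd]
        have hval : ∀ x ∈ s \ D, Function.update g d (∑ i ∈ D, g i) x = g x := by
          intro x hx
          rw [Function.update_of_ne]
          rintro rfl
          exact hds hx
        have hcd := Finset.card_sdiff_add_card_eq_card hDs
        have := ihn _ _ (by rw [Finset.card_insert_of_notMem hds]; omega) (hs.merge hDs hd) (by
          intro x hx
          rcases Finset.mem_insert.1 hx with rfl | hx
          · rwa [Function.update_self]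
          · rw [hval x hx]; exact hne x (Finset.mem_sdiff.1 hx).1) (by
          intro x hx
          rcases Finset.mem_insert.1 hx with rfl | hx
          · rw [Function.update_self, Finset.smul_sum]
            exact Finset.sum_eq_zero fun y hy => hk y (hDs hy)
          · rw [hval x hx]; exact hk x (Finset.mem_sdiff.1 hx).1)
        rw [cr_merge _ _ hds] at this
        refine le_trans ?_ this
        rw [cr_sdiff g hDs]
        have h1 := cr_le g (Nat.mul_pos (pow_pos hp.pos _) hN) hDp (fun x hx => hCo x (hDC hx))
        have h2 := inv_ord_ge (Nat.mul_pos (pow_pos hp.pos j) hN) (hCk D hDC hDφ)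
        have h3 : (p : ℝ) / ((p ^ (j + 1) * N : ℕ) : ℝ) = 1 / ((p ^ j * N : ℕ) : ℝ) := by
          have : (N : ℝ) ≠ 0 := by positivity
          push_cast
          field_simp
          ring
        linarith
      have hkA : ∀ D ⊆ A, φ (∑ i ∈ D, g i) = 0 → (p ^ j * 1) • (∑ i ∈ D, g i) = 0 := by
        intro D hD h0
        have h1 : p ^ (j + 1) • (∑ i ∈ D, g i) = 0 := by
          rw [Finset.smul_sum]
          exact Finset.sum_eq_zero fun y hy => (Finset.mem_filter.1 (hD hy)).2
        have h2 := kill_gcd h0 h1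
        rwa [pow_succ, Nat.gcd_mul_left, hcop.symm.gcd_eq_one] at h2
      by_cases c1 : ∃ D ⊆ A, D.card ≤ p ∧ φ (∑ i ∈ D, g i) = 0 ∧ ∑ i ∈ D, g i ≠ 0
      · exact case1 A 1 one_pos hAX hordA hkA c1
      by_cases c2 : ∃ D ⊆ B, D.card ≤ p ∧ φ (∑ i ∈ D, g i) = 0 ∧ ∑ i ∈ D, g i ≠ 0
      · exact case1 B q hq.pos hBX hordB (fun D _ h => h) c2
      push Not at c1 c2
      have card_of : ∀ C ⊆ X,
          (∀ D ⊆ C, D.card ≤ p → φ (∑ i ∈ D, g i) = 0 → ∑ i ∈ D, g i = 0) → C.card ≤ p := by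
        intro C hC h
        refine prod_bound φ K hKφ (fun x hx => hgK x (hXs (hC hx))) hs (hC.trans hXs)
          (fun x hx => hXφ x (hC hx)) ?_
        intro D hD
        exact free_zero φ K hKφ g C (fun x hx => hgK x (hXs (hC hx))) h D.card D hD le_rfl
      have hAp := card_of A hAX c1
      have hBp := card_of B hBX c2
      have hcrA := cr_le g (Nat.mul_pos (pow_pos hp.pos _) one_pos) hAp hordA
      have hcrB := cr_le g (Nat.mul_pos (pow_pos hp.pos _) hq.pos) hBp hordB
      have hpp : (p : ℝ) / ((p ^ (j + 1) * 1 : ℕ) : ℝ) = 1 / (p : ℝ) ^ j := by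
        push_cast
        field_simp
        ring
      have hppq : (p : ℝ) / ((p ^ (j + 1) * q : ℕ) : ℝ) = 1 / ((p ^ j * q : ℕ) : ℝ) := by
        push_cast
        field_simp
        ring
      rw [hpp] at hcrA
      rw [hppq] at hcrB
      have hsX0 : ∀ x ∈ s \ X, g x ≠ 0 := fun x hx => hne x (Finset.mem_sdiff.1 hx).1
      have hsXk : ∀ x ∈ s \ X, (p ^ j * q) • g x = 0 := by
        intro x hx
        by_contra hcon
        exact (Finset.mem_sdiff.1 hx).2 (Finset.mem_filter.2 ⟨(Finset.mem_sdiff.1 hx).1, hcon⟩)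
      rw [Finset.sum_range_succ, cr_sdiff g hXs]
      by_cases c3 : ∃ D ⊆ X, φ (∑ i ∈ D, g i) = 0 ∧ ∑ i ∈ D, g i ≠ 0
      · obtain ⟨D, hDX, hDφ, hD0⟩ := c3
        have hDs := hDX.trans hXs
        have hDn : D.Nonempty := by
          by_contra hcon
          rw [Finset.not_nonempty_iff_eq_empty] at hcon
          exact hD0 (by rw [hcon, Finset.sum_empty])
        obtain ⟨d, hd⟩ := hDn
        have hval : ∀ x, x ∉ D → Function.update g d (∑ i ∈ D, g i) x = g x := by
          intro x hx
          rw [Function.update_of_ne]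
          rintro rfl
          exact hx hd
        have hset : insert d (s \ D) \ (X \ D) = insert d (s \ X) := by
          ext x
          simp only [mem_sdiff, mem_insert]
          constructor
          · rintro ⟨h1 | h1, h2⟩
            · exact Or.inl h1
            · exact Or.inr ⟨h1.1, fun hx => h2 ⟨hx, h1.2⟩⟩
          · rintro (h1 | h1)
            · exact ⟨Or.inl h1, fun h2 => h2.2 (h1 ▸ hd)⟩
            · exact ⟨Or.inr ⟨h1.1, fun hx => h1.2 (hDX hx)⟩, fun h2 => h1.2 h2.1⟩
        have hdsX : d ∉ s \ X := fun h => (Finset.mem_sdiff.1 h).2 (hDX hd)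
        have hxD : ∀ x ∈ s \ X, x ∉ D := fun x hx h => (Finset.mem_sdiff.1 hx).2 (hDX h)
        have hcol := collapse (E := X \ D) ih (hs.merge hDs hd) (by
          intro x hx
          rw [Finset.mem_sdiff] at hx
          exact Finset.mem_insert_of_mem (Finset.mem_sdiff.2 ⟨hXs hx.1, hx.2⟩)) (by
          rw [hset]
          intro x hx
          rcases Finset.mem_insert.1 hx with rfl | hx
          · rwa [Function.update_self]
          · rw [hval x (hxD x hx)]; exact hsX0 x hx) (by
          rw [hset]
          intro x hx
          rcases Finset.mem_insert.1 hx with rfl | hx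
          · rw [Function.update_self]; exact hDφ
          · rw [hval x (hxD x hx)]; exact hsXk x hx) (by
          rw [Finset.sum_congr rfl (fun x hx => hval x (Finset.mem_sdiff.1 hx).2)]
          have e := Finset.sum_sdiff (f := g) hDX
          have e2 := congrArg φ e
          rw [map_add, hDφ, add_zero, hφX] at e2
          exact e2)
        rw [hset, cr_merge _ _ hdsX] at hcol
        have h2 := inv_ord_ge (Nat.mul_pos (pow_pos hp.pos j) hq.pos) hDφ
        have hXAB : cr X g = cr A g + cr B g :=
          (Finset.sum_filter_add_sum_filter_not X _ _).symm
        linarith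
      · push Not at c3
        have hXp := prod_bound φ K hKφ (fun x hx => hgK x (hXs hx)) hs hXs hXφ c3
        have hcol := collapse ih hs hXs hsX0 hsXk hφX
        have hcrX := cr_le g (Nat.mul_pos (pow_pos hp.pos (j + 1)) one_pos) hXp (by
          intro x hx
          rcases hord x hx with h | h
          · rw [h, mul_one]
          · rw [h]; exact Nat.mul_le_mul_left _ hq.pos)
        rw [hpp] at hcrX
        linarith

end Upper

section Equiv

theorem exists_factor {ι : Type*} [DecidableEq ι] {G : Type*} [AddCommGroup G] (g : ι → G) (n : ℕ) :
    ∀ U : Finset ι, U.card ≤ n → ∑ i ∈ U, g i = 0 →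
      ∃ P : Finpartition U, ∀ I ∈ P.parts, MinZ g I := by
  induction n with
  | zero =>
    intro U hU _
    have : U = ∅ := Finset.card_eq_zero.1 (by omega)
    subst this
    exact ⟨Finpartition.empty _, by simp⟩
  | succ n ih =>
    intro U hU h0
    rcases U.eq_empty_or_nonempty with rfl | ⟨x, hx⟩
    · exact ⟨Finpartition.empty _, by simp⟩
    · obtain ⟨T, hTU, hxT, hT⟩ := exists_minZ U.card U le_rfl h0 x hx
      have hc := Finset.card_sdiff_add_card_eq_card hTU
      have hT1 := hT.1.card_pos
      obtain ⟨P, hP⟩ := ih (U \ T) (by omega) (sdiff_zero hTU h0 hT.2.1)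
      refine ⟨P.extend (b := T) (c := U) hT.1.ne_empty Finset.sdiff_disjoint
        (Finset.sdiff_union_of_subset hTU), ?_⟩
      intro I hI
      rcases Finset.mem_insert.1 hI with rfl | hI
      · exact hT
      · exact hP I hI

variable {G : Type*} [AddCommGroup G] {ℓ : ℕ}

theorem IsUFIM.uf {g : Fin ℓ → G} (h : IsUFIM g) : UF univ g := by
  obtain ⟨-, P, hP, huniq⟩ := h
  have htot : ∑ i, g i = 0 := by
    rw [← P.biUnion_parts, Finset.sum_biUnion P.disjoint]
    exact Finset.sum_eq_zero fun T hT => (hP T hT).2.1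
  have hmem : ∀ T, MinZ g T → T ∈ P.parts := by
    intro T hT
    obtain ⟨Q, hQ⟩ := exists_factor g _ (univ \ T) le_rfl
      (sdiff_zero (Finset.subset_univ _) htot hT.2.1)
    have := huniq (Q.extend (b := T) (c := univ) hT.1.ne_empty Finset.sdiff_disjoint
        (Finset.sdiff_union_of_subset (Finset.subset_univ _))) (by
      intro I hI
      rcases Finset.mem_insert.1 hI with rfl | hI
      · exact hT
      · exact hQ I hI)
    rw [← this]
    exact Finset.mem_insert_self _ _
  refine ⟨htot, ?_⟩
  intro I _ J _ hI hJ
  have hcov : I ∩ J = (P.parts.filter (fun T => T ⊆ I ∩ J)).biUnion id := by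
    ext x
    simp only [mem_biUnion, mem_filter, id]
    constructor
    · intro hx
      obtain ⟨T, hTI, hxT, hT⟩ := exists_minZ I.card I le_rfl hI x (Finset.mem_inter.1 hx).1
      obtain ⟨T', hTJ, hxT', hT'⟩ := exists_minZ J.card J le_rfl hJ x (Finset.mem_inter.1 hx).2
      have : T = T' := P.eq_of_mem_parts (hmem T hT) (hmem T' hT') hxT hxT'
      subst this
      exact ⟨T, ⟨hmem T hT, Finset.subset_inter hTI hTJ⟩, hxT⟩
    · rintro ⟨T, ⟨-, hT⟩, hx⟩
      exact hT hx
  rw [hcov, Finset.sum_biUnion]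
  · exact Finset.sum_eq_zero fun T hT => (hP T (Finset.mem_filter.1 hT).1).2.1
  · exact P.disjoint.subset (by intro T hT; exact (Finset.mem_filter.1 hT).1)

theorem UF.isUFIM {g : Fin ℓ → G} (h : UF univ g) (hne : ∀ i, g i ≠ 0) : IsUFIM g := by
  refine ⟨hne, ?_⟩
  obtain ⟨P, hP⟩ := exists_factor g _ univ le_rfl h.tot
  have key : ∀ Q Q' : Finpartition (univ : Finset (Fin ℓ)), IsFactorization g Q →
      IsFactorization g Q' → Q.parts ⊆ Q'.parts := by
    intro Q Q' hQ hQ' T hT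
    obtain ⟨x, hx⟩ := (hQ T hT).1
    obtain ⟨T', hT', hx'⟩ := Q'.exists_mem (Finset.mem_univ x)
    have : T = T' := by
      by_contra hn
      exact (Finset.disjoint_left.1 (MinZ.disj h (hQ T hT) (hQ' T' hT') (Finset.subset_univ _)
        (Finset.subset_univ _) hn)) hx hx'
    rwa [this]
  exact ⟨P, hP, fun Q hQ => Finpartition.ext ((key Q P hQ hP).antisymm (key P Q hP hQ))⟩

end Equiv

section Lower
variable {G : Type*} [AddCommGroup G]

theorem UF_sum {κ₁ κ₂ : Type*} [Fintype κ₁] [Fintype κ₂] [DecidableEq κ₁] [DecidableEq κ₂]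
    {g : κ₁ → G} {h : κ₂ → G} (hg : UF univ g) (hh : UF univ h)
    (hsep : ∀ I J, ∑ i ∈ I, g i + ∑ i ∈ J, h i = 0 → ∑ i ∈ J, h i = 0) :
    UF univ (Sum.elim g h) := by
  have key : ∀ I : Finset (κ₁ ⊕ κ₂), ∑ i ∈ I, Sum.elim g h i =
      ∑ i ∈ I.toLeft, g i + ∑ i ∈ I.toRight, h i := by
    intro I
    conv_lhs => rw [← Finset.toLeft_disjSum_toRight (u := I)]
    rw [Finset.sum_disjSum]
    simp
  refine ⟨?_, ?_⟩
  · rw [Fintype.sum_sum_type]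
    simp [hg.tot, hh.tot]
  · intro I _ J _ hI hJ
    rw [key] at hI hJ ⊢
    have h1 := hsep _ _ hI
    have h2 := hsep _ _ hJ
    rw [h1, add_zero] at hI
    rw [h2, add_zero] at hJ
    rw [Finset.toLeft_inter, Finset.toRight_inter,
      hg.inter _ (Finset.subset_univ _) _ (Finset.subset_univ _) hI hJ,
      hh.inter _ (Finset.subset_univ _) _ (Finset.subset_univ _) h1 h2, add_zero]

theorem UF_block {κ : Type*} [Fintype κ] [DecidableEq κ] {h : κ → G} (h0 : ∑ i, h i = 0)
    (hJ : ∀ J : Finset κ, ∑ i ∈ J, h i = 0 → J = ∅ ∨ J = univ) : UF univ h := by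
  refine ⟨h0, ?_⟩
  intro I _ J _ hI hJ'
  rcases hJ I hI with rfl | rfl
  · simp
  · simpa using hJ'

theorem UF_equiv {κ κ' : Type*} [Fintype κ] [Fintype κ'] [DecidableEq κ] [DecidableEq κ']
    {g : κ → G} (hg : UF univ g) (e : κ' ≃ κ) : UF univ (g ∘ e) := by
  have key : ∀ I : Finset κ', ∑ i ∈ I, (g ∘ e) i = ∑ i ∈ I.map e.toEmbedding, g i := by
    intro I
    rw [Finset.sum_map]
    rfl
  refine ⟨?_, ?_⟩
  · rw [← hg.tot]
    exact Equiv.sum_comp e g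
  · intro I _ J _ hI hJ
    rw [key] at hI hJ ⊢
    rw [Finset.map_inter]
    exact hg.inter _ (Finset.subset_univ _) _ (Finset.subset_univ _) hI hJ

theorem block_exists (p : ℕ) (hp : p.Prime) (m : ℕ) : ∀ a : G, addOrderOf a = p ^ m →
    ∃ (κ : Type) (_ : Fintype κ) (_ : DecidableEq κ) (g : κ → G), UF univ g ∧ (∀ i, g i ≠ 0) ∧
      (∀ i, g i ∈ AddSubgroup.zmultiples a) ∧ (∀ i, p ^ m • g i = 0) ∧
      cr univ g = ∑ k ∈ Finset.range m, (1 : ℝ) / (p : ℝ) ^ k := by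
  have hp0 : (0 : ℝ) < p := by exact_mod_cast hp.pos
  induction m with
  | zero =>
    intro a _
    refine ⟨Fin 0, inferInstance, inferInstance, fun _ => 0, ⟨by simp, by simp⟩, ?_, ?_, ?_, ?_⟩
    · exact fun i => i.elim0
    · exact fun i => i.elim0
    · exact fun i => i.elim0
    · simp [cr]
  | succ m ih =>
    intro a ha
    have hpa : addOrderOf (p • a) = p ^ m := by
      rw [addOrderOf_nsmul_of_dvd hp.ne_zero (by rw [ha, pow_succ]; exact dvd_mul_left _ _), ha,
        pow_succ, Nat.mul_div_cancel _ hp.pos]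
    obtain ⟨κ, _, _, g, hg, hg0, hgz, hgk, hgc⟩ := ih (p • a) hpa
    have : NeZero p := ⟨hp.ne_zero⟩
    let h : Fin p → G := fun i => a - if i = 0 then p • a else 0
    have hsum : ∀ J : Finset (Fin p), ∑ i ∈ J, h i = J.card • a - if 0 ∈ J then p • a else 0 := by
      intro J
      simp only [h]
      rw [Finset.sum_sub_distrib, Finset.sum_const, Finset.sum_ite_eq']
    have hpm : p ^ (m + 1) • a = 0 := by rw [← ha]; exact addOrderOf_nsmul_eq_zero _
    have hkill : ∀ b : Prop, ∀ [Decidable b], p ^ m • (if b then p • a else 0) = 0 := by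
      intro b _
      split_ifs
      · rw [← mul_nsmul', ← pow_succ]; exact hpm
      · simp
    have htot : ∑ i, h i = 0 := by
      rw [hsum]; simp
    have hpmh : ∀ J : Finset (Fin p), p ^ m • ∑ i ∈ J, h i = 0 → J = ∅ ∨ J = univ := by
      intro J hJ
      rw [hsum, smul_sub, hkill, sub_zero, ← mul_nsmul', ← addOrderOf_dvd_iff_nsmul_eq_zero, ha,
        pow_succ] at hJ
      have hd := Nat.dvd_of_mul_dvd_mul_left (pow_pos hp.pos m) hJ
      have hle : J.card ≤ p := by simpa using Finset.card_le_univ J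
      rcases Nat.eq_zero_or_pos J.card with h1 | h1
      · exact Or.inl (Finset.card_eq_zero.1 h1)
      · right
        rw [← Finset.card_eq_iff_eq_univ, Fintype.card_fin]
        exact le_antisymm hle (Nat.le_of_dvd h1 hd)
    have hh : UF univ h := UF_block htot (fun J hJ => hpmh J (by rw [hJ, smul_zero]))
    have hma : p ^ m • a ≠ 0 := by
      intro hcon
      rw [← addOrderOf_dvd_iff_nsmul_eq_zero, ha] at hcon
      have := (Nat.pow_dvd_pow_iff_le_right hp.one_lt).1 hcon
      omega
    have hhm : ∀ i, p ^ m • h i ≠ 0 := by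
      intro i
      simp only [h]
      rw [smul_sub, hkill, sub_zero]
      exact hma
    have hhm1 : ∀ i, p ^ (m + 1) • h i = 0 := by
      intro i
      simp only [h]
      rw [smul_sub, hpm, pow_succ', mul_nsmul', hkill, smul_zero, sub_zero]
    have hordh : ∀ i, addOrderOf (h i) = p ^ (m + 1) := by
      intro i
      have : Fact p.Prime := ⟨hp⟩
      exact addOrderOf_eq_prime_pow (hhm i) (hhm1 i)
    refine ⟨κ ⊕ Fin p, inferInstance, inferInstance, Sum.elim g h, UF_sum hg hh ?_, ?_, ?_, ?_, ?_⟩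
    · intro I J hIJ
      have e := congrArg (fun v => p ^ m • v) hIJ
      simp only [smul_add, smul_zero] at e
      have e2 : p ^ m • ∑ i ∈ I, g i = 0 := by
        rw [Finset.smul_sum]; exact Finset.sum_eq_zero fun i _ => hgk i
      rw [e2, zero_add] at e
      rcases hpmh J e with rfl | rfl
      · simp
      · exact htot
    · rintro (i | i)
      · exact hg0 i
      · intro hcon
        apply hhm i
        change h i = 0 at hcon
        rw [hcon, smul_zero]
    · rintro (i | i)
      · have h1 : AddSubgroup.zmultiples (p • a) ≤ AddSubgroup.zmultiples a := by
          rw [AddSubgroup.zmultiples_le]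
          exact AddSubgroup.nsmul_mem _ (AddSubgroup.mem_zmultiples a) p
        exact h1 (hgz i)
      · change a - (if i = 0 then p • a else 0) ∈ _
        refine AddSubgroup.sub_mem _ (AddSubgroup.mem_zmultiples a) ?_
        split_ifs
        · exact AddSubgroup.nsmul_mem _ (AddSubgroup.mem_zmultiples a) p
        · exact AddSubgroup.zero_mem _
    · rintro (i | i)
      · change p ^ (m + 1) • g i = 0
        rw [pow_succ', mul_nsmul', hgk i, smul_zero]
      · exact hhm1 i
    · unfold cr at hgc ⊢
      rw [Fintype.sum_sum_type, Finset.sum_range_succ]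
      simp only [Sum.elim_inl, Sum.elim_inr, hordh]
      rw [hgc]
      congr 1
      rw [Finset.sum_const, Finset.card_univ, Fintype.card_fin, nsmul_eq_mul]
      push_cast
      field_simp
      ring

end Lower

section Final
variable {p q m : ℕ}

theorem hK_group (hp : p.Prime) (hq : q.Prime) (hpq : p ≠ q)
    (W : Finset (ZMod (p ^ m) × ZMod q × ZMod q)) (hW : ∀ w ∈ W, p • w = 0) : W.card ≤ p := by
  classical
  have hcop : Nat.Coprime p q := (Nat.coprime_primes hp hq).2 hpq
  have : NeZero (p ^ m) := ⟨(pow_pos hp.pos m).ne'⟩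
  have hz : ∀ c : ZMod q × ZMod q, p • c = 0 → c = 0 := by
    intro c hc
    have h2 : q • c = 0 := by ext <;> simp
    have h3 := kill_gcd hc h2
    rwa [hcop.gcd_eq_one, one_nsmul] at h3
  have h1 : W.card = (W.image Prod.fst).card := by
    rw [Finset.card_image_of_injOn]
    intro w hw w' hw' heq
    refine Prod.ext heq ?_
    rw [hz w.2 (congrArg Prod.snd (hW w hw)), hz w'.2 (congrArg Prod.snd (hW w' hw'))]
  rw [h1]
  refine le_trans (Finset.card_le_card ?_)
    (IsAddCyclic.card_nsmul_eq_zero_le (α := ZMod (p ^ m)) hp.pos)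
  intro x hx
  obtain ⟨w, hw, rfl⟩ := Finset.mem_image.1 hx
  simp only [mem_filter, mem_univ, true_and]
  exact congrArg Prod.fst (hW w hw)

theorem hbase_group {ι : Type*} [DecidableEq ι] (hp : p.Prime) (hq : q.Prime) (hpq : p ≠ q)
    (s : Finset ι) (g : ι → ZMod (p ^ m) × ZMod q × ZMod q) (hs : UF s g)
    (hne : ∀ x ∈ s, g x ≠ 0) (hk : ∀ x ∈ s, q • g x = 0) : s.card ≤ 2 * q := by
  have : Fact q.Prime := ⟨hq⟩
  have hcop : Nat.Coprime (p ^ m) q := Nat.Coprime.pow_left m ((Nat.coprime_primes hp hq).2 hpq)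
  have hfst : ∀ x ∈ s, (g x).1 = 0 := by
    intro x hx
    have h1 : q • (g x).1 = 0 := congrArg Prod.fst (hk x hx)
    have h2 : (p ^ m) • (g x).1 = 0 := by
      rw [nsmul_eq_mul, ZMod.natCast_self, zero_mul]
    have h3 := kill_gcd h2 h1
    rwa [hcop.gcd_eq_one, one_nsmul] at h3
  have hsum : ∀ I ⊆ s, ∑ i ∈ I, (g i).2 = 0 → ∑ i ∈ I, g i = 0 := by
    intro I hI h0
    refine Prod.ext ?_ ?_
    · rw [Prod.fst_sum]
      exact Finset.sum_eq_zero fun x hx => hfst x (hI hx)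
    · rw [Prod.snd_sum]; exact h0
  refine qq_card_le q (g := fun i => (g i).2) ⟨?_, ?_⟩ ?_
  · rw [← Prod.snd_sum, hs.tot]; rfl
  · intro I hI J hJ hI0 hJ0
    rw [← Prod.snd_sum, hs.inter I hI J hJ (hsum I hI hI0) (hsum J hJ hJ0)]; rfl
  · intro x hx h0
    exact hne x hx (Prod.ext (hfst x hx) h0)

theorem lower_group (hp : p.Prime) (hq : q.Prime) :
    ∃ (ℓ : ℕ) (g : Fin ℓ → ZMod (p ^ m) × ZMod q × ZMod q), IsUFIM g ∧
      crossNum g = (∑ k ∈ Finset.range m, (1 : ℝ) / (p : ℝ) ^ k) + 2 := by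
  let a₁ : ZMod (p ^ m) × ZMod q × ZMod q := (1, 0, 0)
  let a₂ : ZMod (p ^ m) × ZMod q × ZMod q := (0, 1, 0)
  let a₃ : ZMod (p ^ m) × ZMod q × ZMod q := (0, 0, 1)
  have o₁ : addOrderOf a₁ = p ^ m := by
    simp [a₁, Prod.addOrderOf_mk, ZMod.addOrderOf_one]
  have o₂ : addOrderOf a₂ = q ^ 1 := by
    simp [a₂, Prod.addOrderOf_mk, ZMod.addOrderOf_one]
  have o₃ : addOrderOf a₃ = q ^ 1 := by
    simp [a₃, Prod.addOrderOf_mk, ZMod.addOrderOf_one]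
  obtain ⟨κ₁, _, _, g₁, u₁, n₁, z₁, -, c₁⟩ := block_exists p hp m a₁ o₁
  obtain ⟨κ₂, _, _, g₂, u₂, n₂, z₂, -, c₂⟩ := block_exists q hq 1 a₂ o₂
  obtain ⟨κ₃, _, _, g₃, u₃, n₃, z₃, -, c₃⟩ := block_exists q hq 1 a₃ o₃
  have y₁ : ∀ i, (g₁ i).2 = 0 := by
    intro i
    obtain ⟨n, hn⟩ := AddSubgroup.mem_zmultiples_iff.1 (z₁ i)
    rw [← hn]; simp [a₁]
  have y₂ : ∀ i, (g₂ i).1 = 0 ∧ (g₂ i).2.2 = 0 := by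
    intro i
    obtain ⟨n, hn⟩ := AddSubgroup.mem_zmultiples_iff.1 (z₂ i)
    rw [← hn]; simp [a₂]
  have y₃ : ∀ i, (g₃ i).1 = 0 ∧ (g₃ i).2.1 = 0 := by
    intro i
    obtain ⟨n, hn⟩ := AddSubgroup.mem_zmultiples_iff.1 (z₃ i)
    rw [← hn]; simp [a₃]
  have u₁₂ : UF univ (Sum.elim g₁ g₂) := by
    refine UF_sum u₁ u₂ fun I J h => ?_
    refine Prod.ext ?_ ?_
    · rw [Prod.fst_sum]
      exact Finset.sum_eq_zero fun i _ => (y₂ i).1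
    · have h' := congrArg Prod.snd h
      rw [Prod.snd_add, Prod.snd_sum, Finset.sum_eq_zero (fun i _ => y₁ i), zero_add] at h'
      exact h'
  have y₁₂ : ∀ i, (Sum.elim g₁ g₂ i).2.2 = 0 := by
    rintro (i | i)
    · simp [y₁ i]
    · exact (y₂ i).2
  have u : UF univ (Sum.elim (Sum.elim g₁ g₂) g₃) := by
    refine UF_sum u₁₂ u₃ fun I J h => ?_
    refine Prod.ext ?_ (Prod.ext ?_ ?_)
    · rw [Prod.fst_sum]
      exact Finset.sum_eq_zero fun i _ => (y₃ i).1
    · rw [Prod.snd_sum, Prod.fst_sum]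
      exact Finset.sum_eq_zero fun i _ => (y₃ i).2
    · have h' := congrArg (fun v => v.2.2) h
      simp only [Prod.snd_add, Prod.snd_sum] at h'
      rw [Finset.sum_eq_zero (fun i _ => y₁₂ i), zero_add] at h'
      rw [Prod.snd_sum, Prod.snd_sum]
      exact h'
  let e := (Fintype.equivFin ((κ₁ ⊕ κ₂) ⊕ κ₃)).symm
  refine ⟨_, Sum.elim (Sum.elim g₁ g₂) g₃ ∘ e, UF.isUFIM (UF_equiv u e) ?_, ?_⟩
  · intro i
    simp only [Function.comp]
    rcases e i with (j | j) | j
    · exact n₁ j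
    · exact n₂ j
    · exact n₃ j
  · unfold crossNum
    simp only [Function.comp]
    rw [Equiv.sum_comp e (fun j => (1 : ℝ) / (addOrderOf (Sum.elim (Sum.elim g₁ g₂) g₃ j) : ℝ))]
    rw [Fintype.sum_sum_type, Fintype.sum_sum_type]
    simp only [Sum.elim_inl, Sum.elim_inr]
    unfold cr at c₁ c₂ c₃
    rw [c₁, c₂, c₃]
    simp
    ring

end Final

/-- `K₁(C_{p^m} ⊕ C_q ⊕ C_q) = Σ_{k=1}^m 1/p^{k−1} + 2 = (p^m − 1)/(p^m − p^{m−1}) + 2`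
for distinct primes `p, q`. -/
theorem K1_pm_q_q (p q : ℕ) (hp : p.Prime) (hq : q.Prime) (hpq : p ≠ q)
    (m : ℕ) (hm : 1 ≤ m) :
    K1 (ZMod (p ^ m) × ZMod q × ZMod q) =
      (∑ k ∈ Finset.range m, (1 : ℝ) / (p : ℝ) ^ k) + 2 ∧
    K1 (ZMod (p ^ m) × ZMod q × ZMod q) =
      ((p : ℝ) ^ m - 1) / ((p : ℝ) ^ m - (p : ℝ) ^ (m - 1)) + 2 := by
  have key : K1 (ZMod (p ^ m) × ZMod q × ZMod q) =
      (∑ k ∈ Finset.range m, (1 : ℝ) / (p : ℝ) ^ k) + 2 := by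
    refine IsGreatest.csSup_eq ⟨lower_group hp hq, ?_⟩
    rintro _ ⟨ℓ, g, hg, rfl⟩
    refine upper p q hp hq hpq (hK_group hp hq hpq) (hbase_group hp hq hpq) m univ g hg.uf
      (fun x _ => hg.1 x) ?_
    intro x _
    have h1 : p ^ m • (g x).1 = 0 := by
      rw [nsmul_eq_mul, ZMod.natCast_self, zero_mul]
    have h2 : q • (g x).2 = 0 := by ext <;> simp
    refine Prod.ext ?_ ?_
    · rw [Prod.smul_fst, mul_comm, mul_nsmul', h1, smul_zero]; rfl
    · rw [Prod.smul_snd, mul_nsmul', h2, smul_zero]; rfl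
  refine ⟨key, key.trans ?_⟩
  congr 1
  have hp1 : (1 : ℝ) < p := by exact_mod_cast hp.one_lt
  have hp0 : (p : ℝ) ≠ 0 := by positivity
  have hp2 : (p : ℝ) - 1 ≠ 0 := by linarith
  obtain ⟨n, rfl⟩ : ∃ n, m = n + 1 := ⟨m - 1, by omega⟩
  simp only [Nat.add_sub_cancel]
  have hden : (p : ℝ) ^ (n + 1) - (p : ℝ) ^ n = (p : ℝ) ^ n * (p - 1) := by ring
  rw [hden]
  clear key hm hden
  induction n with
  | zero => simp [hp2]
  | succ n ih =>
    rw [Finset.sum_range_succ, ih]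
    field_simp
    ring
end

section
/- Let p be an odd prime and m, n ∈ ℕ. Then K_1(C_{p^m} ⊕ C_2^n) = Σ_{k=1}^m 1/p^{k−1} + n = (p^m − 1)/(p^m − p^{m−1}) + n. -/
open Finset

/-- Zero-sum families whose zero-sum subfamilies are closed under intersection. -/
def UF_s5 {ι G : Type*} [DecidableEq ι] [AddCommGroup G] (s : Finset ι) (g : ι → G) : Prop :=
  ∑ i ∈ s, g i = 0 ∧ ∀ A ⊆ s, ∀ B ⊆ s, ∑ i ∈ A, g i = 0 → ∑ i ∈ B, g i = 0 →
    ∑ i ∈ A ∩ B, g i = 0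

lemma exists_min_zs {ι G : Type*} [DecidableEq ι] [AddCommGroup G] (g : ι → G) (s : Finset ι)
    (hs : s.Nonempty) (h0 : ∑ i ∈ s, g i = 0) :
    ∃ U ⊆ s, U.Nonempty ∧ ∑ i ∈ U, g i = 0 ∧ ∀ J ⊂ U, J.Nonempty → ∑ i ∈ J, g i ≠ 0 := by
  induction s using Finset.strongInduction with
  | H s ih =>
    by_cases h : ∀ J ⊂ s, J.Nonempty → ∑ i ∈ J, g i ≠ 0
    · exact ⟨s, Subset.rfl, hs, h0, h⟩
    · push Not at h
      obtain ⟨J, hJ, hJn, hJ0⟩ := h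
      obtain ⟨U, hU, h1⟩ := ih J hJ hJn hJ0
      exact ⟨U, hU.trans hJ.subset, h1⟩

lemma sum_sdiff_zero {ι G : Type*} [DecidableEq ι] [AddCommGroup G] {g : ι → G} {s U : Finset ι}
    (hU : U ⊆ s) (h0 : ∑ i ∈ s, g i = 0) (h1 : ∑ i ∈ U, g i = 0) :
    ∑ i ∈ s \ U, g i = 0 := by
  have := Finset.sum_sdiff (f := g) hU
  rw [h0, h1, add_zero] at this
  exact this

lemma UF_s5.sub {ι G : Type*} [DecidableEq ι] [AddCommGroup G] {g : ι → G} {s U : Finset ι}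
    (h : UF_s5 s g) (hU : U ⊆ s) (h0 : ∑ i ∈ U, g i = 0) : UF_s5 U g :=
  ⟨h0, fun A hA B hB => h.2 A (hA.trans hU) B (hB.trans hU)⟩

lemma UF_s5.collapse {ι G : Type*} [DecidableEq ι] [AddCommGroup G] {g : ι → G} {s T : Finset ι}
    {t : ι} (h : UF_s5 s g) (hT : T ⊆ s) (ht : t ∈ T) :
    UF_s5 (insert t (s \ T)) (Function.update g t (∑ i ∈ T, g i)) := by
  set g' := Function.update g t (∑ i ∈ T, g i) with hg'
  let L : Finset ι → Finset ι := fun A => if t ∈ A then A ∪ T else A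
  have hsum : ∀ A ⊆ insert t (s \ T), ∑ i ∈ A, g' i = ∑ i ∈ L A, g i := by
    intro A hA
    by_cases htA : t ∈ A
    · simp only [L, htA, if_true]
      have e1 : A ∪ T = A.erase t ∪ T := by
        ext x; simp only [mem_union, mem_erase]
        by_cases hx : x = t
        · subst hx; simp [ht]
        · simp [hx]
      have hd : Disjoint (A.erase t) T := by
        rw [Finset.disjoint_left]
        intro x hx hxT
        have h1 := hA (mem_of_mem_erase hx)
        simp only [mem_insert, mem_sdiff] at h1
        rcases h1 with h1 | h1
        · exact (ne_of_mem_erase hx) h1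
        · exact h1.2 hxT
      rw [e1, sum_union hd, ← Finset.sum_erase_add _ _ htA]
      congr 1
      · exact sum_congr rfl fun x hx => by
          rw [hg', Function.update_of_ne (ne_of_mem_erase hx)]
      · simp [hg']
    · simp only [L, htA, if_false]
      refine sum_congr rfl fun x hx => ?_
      rw [hg', Function.update_of_ne]
      rintro rfl; exact htA hx
  have hLs : ∀ A ⊆ insert t (s \ T), L A ⊆ s := by
    intro A hA x hx
    have hts := hT ht
    by_cases htA : t ∈ A
    · simp only [L, htA, if_true, mem_union] at hx
      rcases hx with hx | hx
      · have := hA hx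
        simp only [mem_insert, mem_sdiff] at this
        rcases this with rfl | this
        · exact hts
        · exact this.1
      · exact hT hx
    · simp only [L, htA, if_false] at hx
      have := hA hx
      simp only [mem_insert, mem_sdiff] at this
      rcases this with rfl | this
      · exact hts
      · exact this.1
  have hdis : ∀ A ⊆ insert t (s \ T), t ∉ A → ∀ x ∈ A, x ∉ T := by
    intro A hA htA x hx hxT
    have := hA hx
    simp only [mem_insert, mem_sdiff] at this
    rcases this with rfl | this
    · exact htA hx
    · exact this.2 hxT
  have hLi : ∀ A ⊆ insert t (s \ T), ∀ B ⊆ insert t (s \ T), L (A ∩ B) = L A ∩ L B := by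
    intro A hA B hB
    by_cases htA : t ∈ A <;> by_cases htB : t ∈ B <;> simp only [L, htA, htB, mem_inter, if_true,
      if_false, and_true, and_false, true_and]
    · ext x; simp only [mem_union, mem_inter]; tauto
    · ext x; simp only [mem_union, mem_inter]
      have := hdis B hB htB x; tauto
    · ext x; simp only [mem_union, mem_inter]
      have := hdis A hA htA x; tauto
  have hLt : L (insert t (s \ T)) = s := by
    simp only [L, mem_insert_self, if_true]
    ext x; simp only [mem_union, mem_insert, mem_sdiff]
    constructor
    · rintro ((rfl | h) | h)
      · exact hT ht
      · exact h.1
      · exact hT h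
    · intro hx; by_cases hxT : x ∈ T
      · exact Or.inr hxT
      · exact Or.inl (Or.inr ⟨hx, hxT⟩)
  refine ⟨by rw [hsum _ Subset.rfl, hLt]; exact h.1, fun A hA B hB hA0 hB0 => ?_⟩
  rw [hsum _ hA] at hA0
  rw [hsum _ hB] at hB0
  rw [hsum _ (inter_subset_left.trans hA), hLi A hA B hB]
  exact h.2 _ (hLs A hA) _ (hLs B hB) hA0 hB0

lemma two_le_of_zs {ι G : Type*} [DecidableEq ι] [AddCommGroup G] {g : ι → G} {U : Finset ι}
    (hn : U.Nonempty) (h0 : ∑ i ∈ U, g i = 0) (hne : ∀ i ∈ U, g i ≠ 0) : 2 ≤ U.card := by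
  by_contra hlt
  have h1 : U.card = 1 := by have := hn.card_pos; omega
  obtain ⟨x, rfl⟩ := card_eq_one.1 h1
  simp at h0 hne
  exact hne h0

lemma E_exists {H : Type*} [AddCommGroup H] [DecidableEq H] (g : ℕ → H) (X : Finset ℕ)
    (hX : X.Nonempty) (hU : UF_s5 X g) (hne : ∀ i ∈ X, g i ≠ 0) :
    ∃ E : Finset H, X.card ≤ E.card ∧ (∀ e ∈ E, ∃ C ⊆ X, ∑ i ∈ C, g i = e) ∧
      ∀ e ∈ E, ∀ e' ∈ E, ∃ C ⊆ X, ∑ i ∈ C, g i = e - e' := by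
  induction X using Finset.strongInduction with
  | H X ih =>
    by_cases h : ∀ J ⊂ X, J.Nonempty → ∑ i ∈ J, g i ≠ 0
    · have key : ∀ x ∈ X, ∀ y ∈ X, x < y →
          (∑ i ∈ X with x ≤ i ∧ i < y, g i = (∑ i ∈ X with i < y, g i) - ∑ i ∈ X with i < x, g i) := by
        intro x hx y hy hxy
        rw [eq_sub_iff_add_eq, ← sum_union]
        · congr 1; ext i; simp only [mem_union, mem_filter]
          constructor
          · rintro (h | h)
            · exact ⟨h.1, h.2.2⟩
            · exact ⟨h.1, h.2.trans hxy⟩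
          · intro h
            by_cases hxi : x ≤ i
            · exact Or.inl ⟨h.1, hxi, h.2⟩
            · exact Or.inr ⟨h.1, by omega⟩
        · rw [Finset.disjoint_left]; intro i; simp only [mem_filter]; omega
      have hlt : ∀ x ∈ X, ∀ y ∈ X, x < y → (∑ i ∈ X with i < x, g i) ≠ ∑ i ∈ X with i < y, g i := by
        intro x hx y hy hxy he
        have := key x hx y hy hxy
        rw [he, sub_self] at this
        refine h _ ?_ ⟨x, ?_⟩ this
        · rw [Finset.ssubset_iff_of_subset (filter_subset _ _)]
          exact ⟨y, hy, by simp⟩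
        · simp [hx, hxy]
      refine ⟨X.image (fun x => ∑ i ∈ X with i < x, g i), ?_, ?_, ?_⟩
      · rw [card_image_of_injOn]
        intro x hx y hy he
        rcases lt_trichotomy x y with hl | hl | hl
        · exact absurd he (hlt x hx y hy hl)
        · exact hl
        · exact absurd he.symm (hlt y hy x hx hl)
      · intro e he
        obtain ⟨x, hx, rfl⟩ := mem_image.1 he
        exact ⟨_, filter_subset _ _, rfl⟩
      · intro e he e' he'
        obtain ⟨x, hx, rfl⟩ := mem_image.1 he
        obtain ⟨y, hy, rfl⟩ := mem_image.1 he'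
        rcases lt_trichotomy y x with hl | hl | hl
        · exact ⟨_, filter_subset _ _, key y hy x hx hl⟩
        · subst hl; exact ⟨∅, by simp, by simp⟩
        · refine ⟨X \ {i ∈ X | x ≤ i ∧ i < y}, sdiff_subset, ?_⟩
          have h2 := Finset.sum_sdiff (f := g) (filter_subset (fun i => x ≤ i ∧ i < y) X)
          rw [hU.1, key x hx y hy hl] at h2
          rw [eq_neg_of_add_eq_zero_left h2]; abel
    · push Not at h
      obtain ⟨J, hJ, hJn, hJ0⟩ := h
      have hK0 := sum_sdiff_zero hJ.subset hU.1 hJ0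
      have hKn : (X \ J).Nonempty := by
        rw [sdiff_nonempty]; exact hJ.2
      have hKs : X \ J ⊂ X := by
        refine (Finset.ssubset_iff_of_subset sdiff_subset).2 ?_
        obtain ⟨x, hx⟩ := hJn
        exact ⟨x, hJ.subset hx, by simp [hx]⟩
      obtain ⟨E, hE1, hE2, hE3⟩ := ih J hJ hJn (hU.sub hJ.subset hJ0) (fun i hi => hne i (hJ.subset hi))
      obtain ⟨F, hF1, hF2, hF3⟩ := ih (X \ J) hKs hKn (hU.sub sdiff_subset hK0)
        (fun i hi => hne i (sdiff_subset hi))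
      have hdis : ∀ C ⊆ J, ∀ D ⊆ X \ J, Disjoint C D := fun C hC D hD =>
        Finset.disjoint_of_subset_left hC (Finset.disjoint_of_subset_right hD disjoint_sdiff)
      have hsub : ∀ C ⊆ J, ∀ D ⊆ X \ J, C ∪ D ⊆ X := fun C hC D hD =>
        union_subset (hC.trans hJ.subset) (hD.trans sdiff_subset)
      refine ⟨(E ×ˢ F).image (fun q => q.1 + q.2), ?_, ?_, ?_⟩
      · rw [card_image_of_injOn, card_product]
        · have c1 := two_le_of_zs hJn hJ0 (fun i hi => hne i (hJ.subset hi))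
          have c2 := two_le_of_zs hKn hK0 (fun i hi => hne i (sdiff_subset hi))
          have c3 := card_sdiff_add_card_eq_card hJ.subset
          nlinarith
        · rintro ⟨e, f⟩ h1 ⟨e', f'⟩ h2 heq
          simp only [coe_product, Set.mem_prod, mem_coe] at h1 h2
          simp only at heq
          obtain ⟨C, hC, hCe⟩ := hE3 e h1.1 e' h2.1
          obtain ⟨D, hD, hDe⟩ := hF3 f h1.2 f' h2.2
          have hz : ∑ i ∈ C ∪ D, g i = 0 := by
            rw [sum_union (hdis C hC D hD), hCe, hDe]
            rw [sub_add_sub_comm, heq, sub_self]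
          have := hU.2 _ (hsub C hC D hD) J hJ.subset hz hJ0
          have e1 : (C ∪ D) ∩ J = C := by
            ext x; simp only [mem_inter, mem_union]
            have a1 := @hC x
            have a2 := @hD x
            simp only [mem_sdiff] at a2
            tauto
          rw [e1, hCe, sub_eq_zero] at this
          subst this
          simpa using heq
      · intro e he
        obtain ⟨⟨a, b⟩, hab, rfl⟩ := mem_image.1 he
        rw [mem_product] at hab
        obtain ⟨C, hC, hCe⟩ := hE2 a hab.1
        obtain ⟨D, hD, hDe⟩ := hF2 b hab.2
        exact ⟨C ∪ D, hsub C hC D hD, by rw [sum_union (hdis C hC D hD), hCe, hDe]⟩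
      · intro e he e' he'
        obtain ⟨⟨a, b⟩, hab, rfl⟩ := mem_image.1 he
        obtain ⟨⟨a', b'⟩, hab', rfl⟩ := mem_image.1 he'
        rw [mem_product] at hab hab'
        obtain ⟨C, hC, hCe⟩ := hE3 a hab.1 a' hab'.1
        obtain ⟨D, hD, hDe⟩ := hF3 b hab.2 b' hab'.2
        exact ⟨C ∪ D, hsub C hC D hD, by rw [sum_union (hdis C hC D hD), hCe, hDe]; simp only; abel⟩

/-- The bound on the length of a (not necessarily zero-sum) unique factorization family. -/
lemma card_bound {H : Type*} [AddCommGroup H] [DecidableEq H] (g : ℕ → H) (X : Finset ℕ)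
    (hU : ∀ A ⊆ X, ∀ B ⊆ X, ∑ i ∈ A, g i = 0 → ∑ i ∈ B, g i = 0 → ∑ i ∈ A ∩ B, g i = 0)
    (hne : ∀ i ∈ X, g i ≠ 0) (Q : AddSubgroup H) (F : Finset H) (hF : ∀ x ∈ Q, x ∈ F)
    (hQ : ∀ i ∈ X, g i ∈ Q) : X.card ≤ F.card := by
  rcases X.eq_empty_or_nonempty with rfl | hX
  · simp
  by_cases h0 : ∑ i ∈ X, g i = 0
  · obtain ⟨E, h1, h2, -⟩ := E_exists g X hX ⟨h0, hU⟩ hne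
    refine h1.trans (card_le_card fun e he => ?_)
    obtain ⟨C, hC, rfl⟩ := h2 e he
    exact hF _ (Q.sum_mem fun i hi => hQ i (hC hi))
  · obtain ⟨x, hx⟩ := Infinite.exists_notMem_finset X
    set g' := Function.update g x (-∑ i ∈ X, g i) with hg'
    have hs : ∀ A ⊆ X, ∑ i ∈ A, g' i = ∑ i ∈ A, g i := fun A hA =>
      sum_congr rfl fun i hi => by
        rw [hg', Function.update_of_ne]; rintro rfl; exact hx (hA hi)
    have htot : ∑ i ∈ insert x X, g' i = 0 := by
      rw [sum_insert hx, hs X Subset.rfl]; simp [hg']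
    have hins : ∀ A ⊆ insert x X, x ∈ A → ∑ i ∈ A, g' i = 0 → ∑ i ∈ X \ A, g i = 0 := by
      intro A hA hxA hA0
      have := sum_sdiff_zero hA htot hA0
      rwa [show insert x X \ A = X \ A by
        ext y; simp only [mem_sdiff, mem_insert]
        constructor
        · rintro ⟨rfl | h, h'⟩
          · exact absurd hxA h'
          · exact ⟨h, h'⟩
        · rintro ⟨h, h'⟩; exact ⟨Or.inr h, h'⟩, hs _ sdiff_subset] at this
    have hno : ∀ A ⊆ insert x X, x ∉ A → A ⊆ X := by
      intro A hA hxA y hy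
      rcases mem_insert.1 (hA hy) with rfl | h
      · exact absurd hy hxA
      · exact h
    -- differences of zero-sum subsets of `X`
    have hd : ∀ A ⊆ X, ∀ B ⊆ X, ∑ i ∈ A, g i = 0 → ∑ i ∈ B, g i = 0 → ∑ i ∈ A \ B, g i = 0 := by
      intro A hA B hB hA0 hB0
      rw [← sdiff_inter_self_left]
      exact sum_sdiff_zero inter_subset_left hA0 (hU A hA B hB hA0 hB0)
    have hmix : ∀ A ⊆ insert x X, ∀ B ⊆ insert x X, x ∈ A → x ∉ B → ∑ i ∈ A, g' i = 0 →
        ∑ i ∈ B, g' i = 0 → ∑ i ∈ A ∩ B, g' i = 0 := by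
      intro A hA B hB hxA hxB hA0 hB0
      have hB' := hno B hB hxB
      rw [hs _ (inter_subset_right.trans hB')]
      rw [hs _ hB'] at hB0
      have := hd B hB' (X \ A) sdiff_subset hB0 (hins A hA hxA hA0)
      rwa [show B \ (X \ A) = A ∩ B by
        ext y; simp only [mem_sdiff, mem_inter]; have := @hB' y; tauto] at this
    have hUF : UF_s5 (insert x X) g' := by
      refine ⟨htot, fun A hA B hB hA0 hB0 => ?_⟩
      by_cases hxA : x ∈ A <;> by_cases hxB : x ∈ B
      · have a1 := hins A hA hxA hA0
        have b1 := hins B hB hxB hB0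
        have c1 : ∑ i ∈ (X \ A) ∪ (X \ B), g i = 0 := by
          rw [← union_sdiff_self_eq_union, sum_union disjoint_sdiff, a1,
            hd _ sdiff_subset _ sdiff_subset b1 a1, add_zero]
        rw [← hs _ (union_subset sdiff_subset sdiff_subset)] at c1
        have := sum_sdiff_zero (U := (X \ A) ∪ (X \ B)) ((union_subset sdiff_subset sdiff_subset).trans
          (subset_insert x X)) htot c1
        rwa [show insert x X \ ((X \ A) ∪ (X \ B)) = A ∩ B by
          ext y
          have a2 := @hA y
          simp only [mem_sdiff, mem_inter, mem_union, mem_insert] at a2 ⊢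
          by_cases hy : y = x
          · subst hy; simp [hxA, hxB, hx]
          · tauto] at this
      · exact hmix A hA B hB hxA hxB hA0 hB0
      · rw [inter_comm]; exact hmix B hB A hA hxB hxA hB0 hA0
      · have hA' := hno A hA hxA
        have hB' := hno B hB hxB
        rw [hs _ hA'] at hA0
        rw [hs _ hB'] at hB0
        rw [hs _ (inter_subset_left.trans hA')]
        exact hU A hA' B hB' hA0 hB0
    have hxQ : ∀ i ∈ insert x X, g' i ∈ Q := by
      intro i hi
      by_cases hix : i = x
      · subst hix; simp only [hg', Function.update_self]
        exact Q.neg_mem (Q.sum_mem hQ)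
      · rw [hg', Function.update_of_ne hix]
        exact hQ i (by simpa [hix] using hi)
    obtain ⟨E, h1, h2, -⟩ := E_exists g' (insert x X) (insert_nonempty _ _) hUF (by
      intro i hi
      by_cases hix : i = x
      · subst hix; simpa only [hg', Function.update_self, ne_eq, neg_eq_zero] using h0
      · rw [hg', Function.update_of_ne hix]
        exact hne i (by simpa [hix] using hi))
    refine (card_le_card (subset_insert x X)).trans (h1.trans (card_le_card fun e he => ?_))
    obtain ⟨C, hC, rfl⟩ := h2 e he
    exact hF _ (Q.sum_mem fun i hi => hxQ i (hC hi))

/-- Weight: `1/ord x` for `x ≠ 0`, and `0` for `x = 0`. -/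
noncomputable def wt {G : Type*} [AddCommGroup G] (x : G) : ℝ :=
  open Classical in if x = 0 then 0 else 1 / (addOrderOf x : ℝ)

lemma wt_nonneg {G : Type*} [AddCommGroup G] (x : G) : 0 ≤ wt x := by
  unfold wt; split_ifs <;> positivity

lemma wt_ge {G : Type*} [AddCommGroup G] (x : G) (hx : x ≠ 0) (N : ℕ) (hN : 0 < N)
    (h : N • x = 0) : 1 / (N : ℝ) ≤ wt x := by
  unfold wt
  rw [if_neg hx]
  have h1 := addOrderOf_dvd_of_nsmul_eq_zero h
  have h2 := Nat.le_of_dvd hN h1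
  have h3 := Nat.pos_of_dvd_of_pos h1 hN
  exact one_div_le_one_div_of_le (by exact_mod_cast h3) (by exact_mod_cast h2)

lemma wt_le {G : Type*} [AddCommGroup G] (x : G) (N : ℕ) (hN : 0 < N)
    (h : N ∣ addOrderOf x) : wt x ≤ 1 / (N : ℝ) := by
  unfold wt
  split_ifs
  · positivity
  · rcases Nat.eq_zero_or_pos (addOrderOf x) with h0 | h0
    · rw [h0]; simp
    · exact one_div_le_one_div_of_le (by exact_mod_cast hN) (by exact_mod_cast Nat.le_of_dvd h0 h)

lemma pow_dvd_order {G : Type*} [AddCommGroup G] {p : ℕ} (hp : p.Prime) (hp2 : p ≠ 2) (k : ℕ) (x : G)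
    (h1 : (2 * p ^ (k + 1)) • x = 0) (h2 : (2 * p ^ k) • x ≠ 0) : p ^ (k + 1) ∣ addOrderOf x := by
  have hco : Nat.Coprime 2 p := by
    rw [Nat.coprime_primes Nat.prime_two hp]; exact hp2.symm
  set y := 2 • x with hy
  have e1 : p ^ (k + 1) • y = 0 := by rw [hy, smul_smul, mul_comm, h1]
  have e2 : ¬ p ^ k • y = 0 := by rw [hy, smul_smul, mul_comm]; exact h2
  have : Fact p.Prime := ⟨hp⟩
  have h3 := addOrderOf_eq_prime_pow e2 e1
  have h4 : addOrderOf y ∣ addOrderOf x := by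
    apply addOrderOf_dvd_of_nsmul_eq_zero
    rw [hy, smul_comm, addOrderOf_nsmul_eq_zero, smul_zero]
  rwa [h3] at h4

lemma two_pow_dvd_order {G : Type*} [AddCommGroup G] {p : ℕ} (hp : p.Prime) (hp2 : p ≠ 2) (k : ℕ)
    (x : G)
    (h1 : (2 * p ^ (k + 1)) • x = 0) (h2 : (2 * p ^ k) • x ≠ 0) (h3 : p ^ (k + 1) • x ≠ 0) :
    2 * p ^ (k + 1) ∣ addOrderOf x := by
  have hco : Nat.Coprime 2 (p ^ (k + 1)) := by
    apply Nat.Coprime.pow_right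
    rw [Nat.coprime_primes Nat.prime_two hp]; exact hp2.symm
  refine hco.mul_dvd_of_dvd_of_dvd ?_ (pow_dvd_order hp hp2 k x h1 h2)
  have h4 := addOrderOf_dvd_of_nsmul_eq_zero h1
  by_contra h5
  have h6 : Nat.Coprime (addOrderOf x) 2 := ((Nat.coprime_primes Nat.prime_two
    Nat.prime_two).not.2 (by simp) |> fun _ => ((Nat.prime_two.coprime_iff_not_dvd).2 h5).symm)
  exact h3 (addOrderOf_dvd_iff_nsmul_eq_zero.1 (h6.dvd_of_dvd_mul_left h4))

lemma collapse_sum {G : Type*} [AddCommGroup G] (g : ℕ → G) (s T : Finset ℕ) (t : ℕ) (hT : T ⊆ s)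
    (ht : t ∈ T) :
    ∑ i ∈ insert t (s \ T), wt (Function.update g t (∑ i ∈ T, g i) i) =
      wt (∑ i ∈ T, g i) + (∑ i ∈ s, wt (g i) - ∑ i ∈ T, wt (g i)) := by
  rw [sum_insert (by simp [ht]), Function.update_self]
  congr 1
  rw [eq_sub_iff_add_eq, ← sum_sdiff hT]
  congr 1
  refine sum_congr rfl fun i hi => ?_
  rw [Function.update_of_ne]
  rintro rfl
  exact (mem_sdiff.1 hi).2 ht

lemma collapse_forall {G : Type*} [AddCommGroup G] (g : ℕ → G) (s T : Finset ℕ) (t : ℕ)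
    (ht : t ∈ T) (P : G → Prop) (h1 : ∀ i ∈ s \ T, P (g i)) (h2 : P (∑ i ∈ T, g i)) :
    ∀ i ∈ insert t (s \ T), P (Function.update g t (∑ i ∈ T, g i) i) := by
  intro i hi
  rcases mem_insert.1 hi with rfl | hi'
  · simpa using h2
  · rw [Function.update_of_ne]
    · exact h1 i hi'
    · rintro rfl; exact (mem_sdiff.1 hi').2 ht

/-- If all minimal `N`-zero-sum sets inside `B` are zero-sum, then all are. -/
lemma all_of_min {G : Type*} [AddCommGroup G] (g φ : ℕ → G) (B : Finset ℕ)
    (h : ∀ T ⊆ B, T.Nonempty → ∑ i ∈ T, φ i = 0 → (∀ J ⊂ T, J.Nonempty → ∑ i ∈ J, φ i ≠ 0) →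
      ∑ i ∈ T, g i = 0) (T : Finset ℕ) (hT : T ⊆ B) (h0 : ∑ i ∈ T, φ i = 0) : ∑ i ∈ T, g i = 0 := by
  induction T using Finset.strongInduction with
  | H T ih =>
    rcases T.eq_empty_or_nonempty with rfl | hn
    · simp
    obtain ⟨U, hU, hUn, hU0, hUm⟩ := exists_min_zs φ T hn h0
    rw [← sum_sdiff hU, h U (hU.trans hT) hUn hU0 hUm, add_zero]
    refine ih (T \ U) ?_ (sdiff_subset.trans hT) (sum_sdiff_zero hU h0 hU0)
    refine (Finset.ssubset_iff_of_subset sdiff_subset).2 ?_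
    obtain ⟨x, hx⟩ := hUn
    exact ⟨x, hU hx, by simp [hx]⟩

lemma step {G : Type*} [AddCommGroup G] {p : ℕ} (hp : p.Prime) (hp2 : p ≠ 2) (k : ℕ)
    (F : Finset G) (hF : ∀ x : G, p • x = 0 → x ∈ F) (hFc : F.card ≤ p) (c : ℝ)
    (hc : ∀ (s : Finset ℕ) (g : ℕ → G), UF_s5 s g → (∀ i ∈ s, (2 * p ^ k) • g i = 0) →
      ∑ i ∈ s, wt (g i) ≤ c) :
    ∀ (N : ℕ) (s : Finset ℕ) (g : ℕ → G), s.card = N → UF_s5 s g →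
      (∀ i ∈ s, (2 * p ^ (k + 1)) • g i = 0) → ∑ i ∈ s, wt (g i) ≤ c + 1 / (p : ℝ) ^ k := by
  classical
  intro N
  induction N using Nat.strong_induction_on with
  | _ N ih =>
  intro s g hcard hUF hk
  have hp0 : (0 : ℝ) < p := by exact_mod_cast hp.pos
  have hpk : (0 : ℝ) < (p : ℝ) ^ k := by positivity
  set φ : ℕ → G := fun i => (2 * p ^ k) • g i with hφ
  have hφs : ∀ T : Finset ℕ, ∑ i ∈ T, φ i = (2 * p ^ k) • ∑ i ∈ T, g i := fun T => by
    rw [smul_sum]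
  have hpφ : ∀ i ∈ s, p • φ i = 0 := fun i hi => by
    rw [hφ, smul_smul, show p * (2 * p ^ k) = 2 * p ^ (k + 1) by ring]; exact hk i hi
  set A := s.filter (fun i => φ i ≠ 0) with hA
  set A1 := A.filter (fun i => p ^ (k + 1) • g i = 0) with hA1
  set A2 := A.filter (fun i => ¬ p ^ (k + 1) • g i = 0) with hA2
  have hAs : A ⊆ s := filter_subset _ _
  have h1A : A1 ⊆ A := filter_subset _ _
  have h2A : A2 ⊆ A := filter_subset _ _
  have hAne : ∀ i ∈ A, φ i ≠ 0 := fun i hi => (mem_filter.1 hi).2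
  -- weights
  have hwA : ∀ i ∈ A, wt (g i) ≤ 1 / (p : ℝ) ^ k / p := fun i hi => by
    have := wt_le (g i) _ (by have := hp.pos; positivity)
      (pow_dvd_order hp hp2 k (g i) (hk i (hAs hi)) (hAne i hi))
    rw [div_div, ← pow_succ]; exact_mod_cast this
  have hwA2 : ∀ i ∈ A2, wt (g i) ≤ 1 / (2 * (p : ℝ) ^ k) / p := fun i hi => by
    have := wt_le (g i) _ (by have := hp.pos; positivity)
      (two_pow_dvd_order hp hp2 k (g i) (hk i (hAs (h2A hi))) (hAne i (h2A hi)) (mem_filter.1 hi).2)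
    rw [div_div, mul_assoc, ← pow_succ]; exact_mod_cast this
  have hsumle : ∀ (T : Finset ℕ) (d : ℝ), 0 ≤ d → T.card ≤ p → (∀ i ∈ T, wt (g i) ≤ d / p) →
      ∑ i ∈ T, wt (g i) ≤ d := by
    intro T d hd hT hw
    calc ∑ i ∈ T, wt (g i) ≤ T.card • (d / p) := sum_le_card_nsmul _ _ _ hw
      _ = (T.card : ℝ) * (d / p) := by rw [nsmul_eq_mul]
      _ ≤ p * (d / p) := by gcongr
      _ = d := by field_simp
  -- the length bound
  have hbound : ∀ B ⊆ A, (∀ C ⊆ B, ∀ D ⊆ B, ∑ i ∈ C, φ i = 0 → ∑ i ∈ D, φ i = 0 →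
      ∑ i ∈ C ∩ D, φ i = 0) → B.card ≤ p := by
    intro B hB h
    refine (card_bound φ B h (fun i hi => hAne i (hB hi)) (nsmulAddMonoidHom p).ker F ?_ ?_).trans hFc
    · intro x hx; exact hF x (by simpa [AddMonoidHom.mem_ker] using hx)
    · intro i hi; simpa [AddMonoidHom.mem_ker] using hpφ i (hAs (hB hi))
  have hbound' : ∀ B ⊆ A, (∀ T ⊆ B, ∑ i ∈ T, φ i = 0 → ∑ i ∈ T, g i = 0) → B.card ≤ p := by
    intro B hB h
    refine hbound B hB fun C hC D hD hC0 hD0 => ?_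
    rw [hφs, hUF.2 C (hC.trans (hB.trans hAs)) D (hD.trans (hB.trans hAs)) (h C hC hC0) (h D hD hD0),
      smul_zero]
  have hminb : ∀ T ⊆ A, T.Nonempty → ∑ i ∈ T, φ i = 0 →
      (∀ J ⊂ T, J.Nonempty → ∑ i ∈ J, φ i ≠ 0) → T.card ≤ p := by
    intro T hT hTn hT0 hTm
    refine hbound T hT fun C hC D hD hC0 hD0 => ?_
    rcases C.eq_empty_or_nonempty with rfl | hCn
    · simp
    by_cases hCT : C = T
    · subst hCT; rwa [inter_eq_right.2 hD]
    · exact absurd hC0 (hTm C (Finset.ssubset_iff_subset_ne.2 ⟨hC, hCT⟩) hCn)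
  -- pure collapses
  have hpure : ∀ T ⊆ A, T.Nonempty → ∑ i ∈ T, φ i = 0 →
      ∑ i ∈ T, wt (g i) ≤ wt (∑ i ∈ T, g i) → ∑ i ∈ s, wt (g i) ≤ c + 1 / (p : ℝ) ^ k := by
    intro T hT hTn hT0 hw
    have hcT := two_le_of_zs hTn hT0 (fun i hi => hAne i (hT hi))
    obtain ⟨t, ht⟩ := hTn
    have hTs := hT.trans hAs
    have hu := hUF.collapse hTs ht
    have := ih (insert t (s \ T)).card (by
      rw [card_insert_of_notMem (by simp [ht])]
      have := card_sdiff_add_card_eq_card hTs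
      omega) _ _ rfl hu (collapse_forall g s T t ht (fun x => (2 * p ^ (k + 1)) • x = 0)
        (fun i hi => hk i (sdiff_subset hi)) (by
          rw [smul_sum]; exact sum_eq_zero fun i hi => hk i (hTs hi)))
    rw [collapse_sum g s T t hTs ht] at this
    linarith
  by_cases hc1 : ∀ T ⊆ A1, T.Nonempty → ∑ i ∈ T, φ i = 0 →
      (∀ J ⊂ T, J.Nonempty → ∑ i ∈ J, φ i ≠ 0) → ∑ i ∈ T, g i = 0
  swap
  · push Not at hc1
    obtain ⟨T, hT, hTn, hT0, hTm, hTg⟩ := hc1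
    refine hpure T (hT.trans h1A) hTn hT0 ?_
    refine (hsumle T _ (by positivity) (hminb T (hT.trans h1A) hTn hT0 hTm)
      (fun i hi => hwA i (h1A (hT hi)))).trans ?_
    have h3 : p ^ k • ∑ i ∈ T, g i = 0 := by
      have a1 : p ^ (k + 1) • ∑ i ∈ T, g i = 0 := by
        rw [smul_sum]; exact sum_eq_zero fun i hi => (mem_filter.1 (hT hi)).2
      rw [hφs] at hT0
      have a2 := Nat.dvd_gcd (addOrderOf_dvd_of_nsmul_eq_zero a1) (addOrderOf_dvd_of_nsmul_eq_zero hT0)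
      rw [pow_succ', Nat.gcd_mul_right, (Nat.coprime_primes hp Nat.prime_two).2 hp2, one_mul] at a2
      exact addOrderOf_dvd_iff_nsmul_eq_zero.1 a2
    have := wt_ge _ hTg _ (pow_pos hp.pos k) h3
    exact_mod_cast this
  by_cases hc2 : ∀ T ⊆ A2, T.Nonempty → ∑ i ∈ T, φ i = 0 →
      (∀ J ⊂ T, J.Nonempty → ∑ i ∈ J, φ i ≠ 0) → ∑ i ∈ T, g i = 0
  swap
  · push Not at hc2
    obtain ⟨T, hT, hTn, hT0, hTm, hTg⟩ := hc2
    refine hpure T (hT.trans h2A) hTn hT0 ?_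
    refine (hsumle T _ (by positivity) (hminb T (hT.trans h2A) hTn hT0 hTm)
      (fun i hi => hwA2 i (hT hi))).trans ?_
    rw [hφs] at hT0
    have := wt_ge _ hTg _ (by have := hp.pos; positivity) hT0
    exact_mod_cast this
  have hb1 := hbound' A1 h1A (all_of_min g φ A1 hc1)
  have hb2 := hbound' A2 h2A (all_of_min g φ A2 hc2)
  have hA12 : ∑ i ∈ A, wt (g i) = ∑ i ∈ A1, wt (g i) + ∑ i ∈ A2, wt (g i) :=
    (sum_filter_add_sum_filter_not A _ _).symm
  have hl1 := hsumle A1 _ (by positivity) hb1 (fun i hi => hwA i (h1A hi))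
  have hl2 := hsumle A2 _ (by positivity) hb2 hwA2
  have hsA : ∀ i ∈ s \ A, (2 * p ^ k) • g i = 0 := by
    intro i hi
    rw [mem_sdiff, hA, mem_filter] at hi
    by_contra hcon
    exact hi.2 ⟨hi.1, hcon⟩
  have hA0 : ∑ i ∈ A, φ i = 0 := by
    have e1 : ∑ i ∈ s, φ i = 0 := by rw [hφs, hUF.1, smul_zero]
    rw [← sum_sdiff hAs, sum_eq_zero hsA, zero_add] at e1
    exact e1
  rcases A.eq_empty_or_nonempty with hAe | hAn
  · have := hc s g hUF (fun i hi => hsA i (by simp [hAe, hi]))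
    have : 0 ≤ 1 / (p : ℝ) ^ k := by positivity
    linarith
  by_cases hc3 : ∀ T ⊆ A, ∑ i ∈ T, φ i = 0 → ∑ i ∈ T, g i = 0
  · have hl := hsumle A _ (by positivity) (hbound' A Subset.rfl hc3) hwA
    obtain ⟨t, ht⟩ := hAn
    have := hc _ _ (hUF.collapse hAs ht) (collapse_forall g s A t ht (fun x => (2 * p ^ k) • x = 0)
      hsA (by rw [← hφs]; exact hA0))
    rw [collapse_sum g s A t hAs ht] at this
    have := wt_nonneg (∑ i ∈ A, g i)
    linarith
  · push Not at hc3
    obtain ⟨T, hT, hT0, hTg⟩ := hc3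
    have hTs := hT.trans hAs
    have hTn : T.Nonempty := by
      rw [nonempty_iff_ne_empty]; rintro rfl; simp at hTg
    obtain ⟨t, ht⟩ := hTn
    have hu := hUF.collapse hTs ht
    have hT0' := hT0
    rw [hφs] at hT0'
    have hw := wt_ge _ hTg _ (by have := hp.pos; positivity) hT0'
    have hw' : 1 / (2 * (p : ℝ) ^ k) ≤ wt (∑ i ∈ T, g i) := by exact_mod_cast hw
    have hhalf : 1 / (2 * (p : ℝ) ^ k) * 2 = 1 / (p : ℝ) ^ k := by field_simp
    have hsplit := sum_sdiff (f := fun i => wt (g i)) hT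
    have hsum1 := collapse_sum g s T t hTs ht
    set g1 := Function.update g t (∑ i ∈ T, g i) with hg1
    set s1 := insert t (s \ T) with hs1
    have hg1t : ∀ i ∈ A \ T, g1 i = g i := fun i hi => by
      rw [hg1, Function.update_of_ne]; rintro rfl; exact (mem_sdiff.1 hi).2 ht
    have e1 : ∑ i ∈ A \ T, g1 i = ∑ i ∈ A \ T, g i := sum_congr rfl hg1t
    have e2 : ∑ i ∈ A \ T, wt (g1 i) = ∑ i ∈ A \ T, wt (g i) :=
      sum_congr rfl fun i hi => by rw [hg1t i hi]
    have hkill : ∀ i ∈ s1 \ (A \ T), (2 * p ^ k) • g1 i = 0 := by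
      intro i hi
      rw [mem_sdiff, hs1, mem_insert] at hi
      by_cases hit : i = t
      · subst hit; rw [hg1, Function.update_self]; exact hT0'
      · rw [hg1, Function.update_of_ne hit]
        have h1 := hi.1.resolve_left hit
        refine hsA i (mem_sdiff.2 ⟨(mem_sdiff.1 h1).1, fun hiA => hi.2 ?_⟩)
        exact mem_sdiff.2 ⟨hiA, (mem_sdiff.1 h1).2⟩
    rcases (A \ T).eq_empty_or_nonempty with hAT | hAT
    · rw [hAT, sdiff_empty] at hkill
      have := hc s1 g1 hu hkill
      rw [hAT, sum_empty] at hsplit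
      linarith
    · obtain ⟨t', ht'⟩ := hAT
      have hsub : A \ T ⊆ s1 := (sdiff_subset_sdiff hAs Subset.rfl).trans (subset_insert _ _)
      have := hc _ _ (hu.collapse hsub ht') (collapse_forall g1 s1 (A \ T) t' ht'
        (fun x => (2 * p ^ k) • x = 0) hkill (by
          rw [e1, ← hφs]; exact sum_sdiff_zero hT hA0 hT0))
      rw [collapse_sum g1 s1 (A \ T) t' hsub ht', hsum1, e2] at this
      have := wt_nonneg (∑ i ∈ A \ T, g1 i)
      linarith

lemma upper_gen {G : Type*} [AddCommGroup G] {p : ℕ} (hp : p.Prime) (hp2 : p ≠ 2)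
    (F : Finset G) (hF : ∀ x : G, p • x = 0 → x ∈ F) (hFc : F.card ≤ p) (c : ℝ)
    (hc : ∀ (s : Finset ℕ) (g : ℕ → G), UF_s5 s g → (∀ i ∈ s, 2 • g i = 0) →
      ∑ i ∈ s, wt (g i) ≤ c) (k : ℕ) :
    ∀ (s : Finset ℕ) (g : ℕ → G), UF_s5 s g →
      (∀ i ∈ s, (2 * p ^ k) • g i = 0) →
      ∑ i ∈ s, wt (g i) ≤ c + ∑ j ∈ range k, 1 / (p : ℝ) ^ j := by
  induction k with
  | zero => simpa using hc
  | succ k ih =>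
    intro s g h1 h2
    rw [sum_range_succ, ← add_assoc]
    exact step hp hp2 k F hF hFc _ ih _ s g rfl h1 h2

lemma half_free {G : Type*} [AddCommGroup G] (g : ℕ → G) (X : Finset ℕ) (hU : UF_s5 X g)
    (hne : ∀ i ∈ X, g i ≠ 0) : ∃ Y ⊆ X, X.card ≤ 2 * Y.card ∧
      ∀ B ⊆ Y, ∑ i ∈ B, g i = 0 → B = ∅ := by
  induction X using Finset.strongInduction with
  | H X ih =>
    rcases X.eq_empty_or_nonempty with rfl | hn
    · exact ⟨∅, by simp, by simp, fun B hB _ => subset_empty.1 hB⟩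
    obtain ⟨U, hUX, hUn, hU0, hUm⟩ := exists_min_zs g X hn hU.1
    have hc := two_le_of_zs hUn hU0 (fun i hi => hne i (hUX hi))
    obtain ⟨x, hx⟩ := hUn
    obtain ⟨Y, hY, hYc, hYf⟩ := ih (X \ U)
      ((Finset.ssubset_iff_of_subset sdiff_subset).2 ⟨x, hUX hx, by simp [hx]⟩)
      (hU.sub sdiff_subset (sum_sdiff_zero hUX hU.1 hU0)) (fun i hi => hne i (sdiff_subset hi))
    have hd : Disjoint Y (U.erase x) :=
      Finset.disjoint_of_subset_left hY (Finset.disjoint_of_subset_right (erase_subset _ _)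
        sdiff_disjoint)
    have hsub : Y ∪ U.erase x ⊆ X :=
      union_subset (hY.trans sdiff_subset) ((erase_subset _ _).trans hUX)
    refine ⟨Y ∪ U.erase x, hsub, ?_, ?_⟩
    · rw [card_union_of_disjoint hd, card_erase_of_mem hx]
      have := card_sdiff_add_card_eq_card hUX
      omega
    · intro B hB hB0
      have h1 := hU.2 B (hB.trans hsub) U hUX hB0 hU0
      have hxB : x ∉ B := fun h => by
        have := hB h
        simp only [mem_union, mem_erase, ne_eq, not_true, false_and, or_false] at this
        exact (mem_sdiff.1 (hY this)).2 hx
      have h2 : B ∩ U = ∅ := by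
        by_contra hne'
        refine hUm (B ∩ U) ?_ (nonempty_iff_ne_empty.2 hne') h1
        exact (Finset.ssubset_iff_of_subset inter_subset_right).2 ⟨x, hx, by simp [hxB]⟩
      refine hYf B (fun y hy => ?_) hB0
      rcases mem_union.1 (hB hy) with h | h
      · exact h
      · have : y ∈ B ∩ U := mem_inter.2 ⟨hy, mem_of_mem_erase h⟩
        simp [h2] at this

lemma base_gen {G : Type*} [AddCommGroup G] (n : ℕ)
    (F : Finset G) (hF : ∀ x : G, 2 • x = 0 → x ∈ F) (hFc : F.card ≤ 2 ^ n)
    (s : Finset ℕ) (g : ℕ → G) (hU : UF_s5 s g) (h2 : ∀ i ∈ s, 2 • g i = 0) :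
    ∑ i ∈ s, wt (g i) ≤ n := by
  classical
  set X := s.filter (fun i => g i ≠ 0) with hX
  have hXs : X ⊆ s := filter_subset _ _
  have hX0 : ∑ i ∈ X, g i = 0 := by rw [hX, sum_filter_ne_zero]; exact hU.1
  obtain ⟨Y, hY, hYc, hYf⟩ := half_free g X (hU.sub hXs hX0) (fun i hi => (mem_filter.1 hi).2)
  have hcard : Y.card ≤ n := by
    have h3 : Y.powerset.card ≤ F.card := by
      refine card_le_card_of_injOn (fun B => ∑ i ∈ B, g i) ?_ ?_
      · intro B hB
        apply hF
        rw [smul_sum]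
        exact sum_eq_zero fun i hi => h2 i (hXs (hY (mem_powerset.1 hB hi)))
      · intro B hB C hC he
        simp only [coe_powerset, Set.mem_preimage, Set.mem_powerset_iff, coe_subset] at hB hC he
        have hBC : ∑ i ∈ (B \ C) ∪ (C \ B), g i = 0 := by
          rw [sum_union disjoint_sdiff_sdiff]
          have e1 := sum_sdiff_sub_sum_sdiff (f := g) (s₁ := B) (s₂ := C)
          rw [← he, sub_self, sub_eq_zero] at e1
          rw [e1, ← two_smul ℕ, smul_sum]
          exact sum_eq_zero fun i hi => h2 i (hXs (hY (hB (mem_sdiff.1 hi).1)))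
        have := hYf _ (union_subset (sdiff_subset.trans hB) (sdiff_subset.trans hC)) hBC
        rw [union_eq_empty, sdiff_eq_empty_iff_subset, sdiff_eq_empty_iff_subset] at this
        exact Subset.antisymm this.1 this.2
    rw [card_powerset] at h3
    exact (Nat.pow_le_pow_iff_right (by norm_num)).1 (h3.trans hFc)
  have e : ∑ i ∈ s, wt (g i) = ∑ i ∈ X, wt (g i) := by
    rw [hX, sum_filter]
    refine sum_congr rfl fun i hi => ?_
    by_cases h : g i = 0
    · simp [h, wt]
    · simp [h]
  rw [e]
  have hw : ∀ i ∈ X, wt (g i) ≤ 1 / 2 := by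
    intro i hi
    have : Fact (Nat.Prime 2) := ⟨Nat.prime_two⟩
    have := addOrderOf_eq_prime (h2 i (hXs hi)) (mem_filter.1 hi).2
    simpa using wt_le (g i) 2 (by norm_num) (by rw [this])
  have h4 := sum_le_card_nsmul _ _ _ hw
  rw [nsmul_eq_mul] at h4
  have h5 : (X.card : ℝ) ≤ 2 * n := by exact_mod_cast hYc.trans (by omega)
  linarith

lemma upper_main (p : ℕ) (hp : p.Prime) (hp2 : p ≠ 2) (m n : ℕ)
    (s : Finset ℕ) (g : ℕ → ZMod (p ^ m) × (Fin n → ZMod 2)) (hU : UF_s5 s g) :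
    ∑ i ∈ s, wt (g i) ≤ n + ∑ j ∈ range m, 1 / (p : ℝ) ^ j := by
  classical
  have : NeZero (p ^ m) := ⟨pow_ne_zero _ hp.ne_zero⟩
  have hco : Nat.Coprime p 2 := (Nat.coprime_primes hp Nat.prime_two).2 hp2
  have hv : ∀ v : Fin n → ZMod 2, 2 • v = 0 := fun v => by
    ext i
    have : ((2 : ℕ) : ZMod 2) = 0 := ZMod.natCast_self 2
    simp only [Pi.smul_apply, nsmul_eq_mul, this, zero_mul, Pi.zero_apply]
  have ha : ∀ a : ZMod (p ^ m), p ^ m • a = 0 := fun a => by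
    rw [nsmul_eq_mul, ZMod.natCast_self, zero_mul]
  refine upper_gen hp hp2 ((univ.filter fun a : ZMod (p ^ m) => p • a = 0) ×ˢ {0}) ?_ ?_ n ?_ m s g hU ?_
  · rintro ⟨a, v⟩ hx
    simp only [Prod.smul_mk, Prod.mk_eq_zero] at hx
    simp only [mem_product, mem_filter, mem_univ, true_and, mem_singleton]
    refine ⟨hx.1, ?_⟩
    have := Nat.dvd_gcd (addOrderOf_dvd_of_nsmul_eq_zero hx.2) (addOrderOf_dvd_of_nsmul_eq_zero (hv v))
    rw [hco, Nat.dvd_one, AddMonoid.addOrderOf_eq_one_iff] at this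
    exact this
  · rw [card_product, card_singleton, mul_one]
    exact IsAddCyclic.card_nsmul_eq_zero_le hp.pos
  · refine base_gen n ({0} ×ˢ univ) ?_ ?_
    · rintro ⟨a, v⟩ hx
      simp only [Prod.smul_mk, Prod.mk_eq_zero] at hx
      simp only [mem_product, mem_univ, and_true, mem_singleton]
      have := Nat.dvd_gcd (addOrderOf_dvd_of_nsmul_eq_zero (ha a)) (addOrderOf_dvd_of_nsmul_eq_zero hx.1)
      rw [hco.pow_left, Nat.dvd_one, AddMonoid.addOrderOf_eq_one_iff] at this
      exact this
    · simp
  · intro i hi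
    rcases g i with ⟨a, v⟩
    rw [Prod.smul_mk, mul_smul, ha, smul_zero, mul_comm, mul_smul, hv, smul_zero]; rfl

lemma UF_s5.map {ι κ G : Type*} [DecidableEq ι] [DecidableEq κ] [AddCommGroup G] {g : ι → G}
    {s : Finset ι} (h : UF_s5 s g) (e : ι ↪ κ) (g' : κ → G) (hg : ∀ i, g' (e i) = g i) :
    UF_s5 (s.map e) g' := by
  refine ⟨by simp [sum_map, hg, h.1], fun A hA B hB hA0 hB0 => ?_⟩
  obtain ⟨A, hA', rfl⟩ := subset_map_iff.1 hA
  obtain ⟨B, hB', rfl⟩ := subset_map_iff.1 hB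
  rw [← map_inter]
  simp only [sum_map, hg] at hA0 hB0 ⊢
  exact h.2 A hA' B hB' hA0 hB0

/-- Partial factorizations extend. -/
lemma extend_fact {G : Type*} [AddCommGroup G] {ℓ : ℕ} (g : Fin ℓ → G) (N : ℕ) :
    ∀ (A B : Finset (Fin ℓ)) (hAB : A ⊆ B) (Q : Finpartition A), (∀ I ∈ Q.parts, IsMinZeroSum g I) →
      ∑ i ∈ A, g i = 0 → ∑ i ∈ B, g i = 0 → (B \ A).card = N →
      ∃ R : Finpartition B, (∀ I ∈ R.parts, IsMinZeroSum g I) ∧ Q.parts ⊆ R.parts := by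
  induction N using Nat.strong_induction_on with
  | _ N ih =>
    intro A B hAB Q hQ hA0 hB0 hN
    rcases (B \ A).eq_empty_or_nonempty with h | h
    · have : A = B := Subset.antisymm hAB (sdiff_eq_empty_iff_subset.1 h)
      subst this
      exact ⟨Q, hQ, Subset.rfl⟩
    · obtain ⟨U, hU, hUn, hU0, hUm⟩ := exists_min_zs g (B \ A) h (sum_sdiff_zero hAB hB0 hA0)
      have hd : Disjoint A U := Finset.disjoint_of_subset_right hU disjoint_sdiff
      obtain ⟨x, hx⟩ := hUn
      have hU' := hU.trans sdiff_subset
      obtain ⟨R, hR1, hR2⟩ := ih (B \ (A ∪ U)).card (by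
          rw [← hN]
          refine card_lt_card ((Finset.ssubset_iff_of_subset
            (sdiff_subset_sdiff Subset.rfl subset_union_left)).2 ⟨x, hU hx, by simp [hx]⟩))
        (A ∪ U) B (union_subset hAB hU')
        (Q.extend (b := U) (c := A ∪ U) (Finset.nonempty_iff_ne_empty.1 ⟨x, hx⟩) hd rfl)
        (by
          intro I hI
          simp only [Finpartition.extend, mem_insert] at hI
          rcases hI with rfl | hI
          · exact ⟨⟨x, hx⟩, hU0, hUm⟩
          · exact hQ I hI)
        (by rw [sum_union hd, hA0, hU0, add_zero]) hB0 rfl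
      refine ⟨R, hR1, fun I hI => hR2 ?_⟩
      simp only [Finpartition.extend, mem_insert]
      exact Or.inr hI

lemma empty_fact {G : Type*} [AddCommGroup G] {ℓ : ℕ} (g : Fin ℓ → G) (A : Finset (Fin ℓ))
    (hA : ∑ i ∈ A, g i = 0) : ∃ Q : Finpartition A, ∀ I ∈ Q.parts, IsMinZeroSum g I := by
  obtain ⟨R, hR, -⟩ := extend_fact g _ ∅ A (empty_subset _) (Finpartition.empty _)
    (by intro I hI; simp [Finpartition.empty] at hI) (by simp) hA rfl
  exact ⟨R, hR⟩

lemma UF_of_IsUFIM {G : Type*} [AddCommGroup G] {ℓ : ℕ} (g : Fin ℓ → G) (h : IsUFIM g) :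
    UF_s5 univ g := by
  obtain ⟨-, P, hP, huniq⟩ := h
  have hsumP : ∀ A : Finset (Fin ℓ), (∀ I ∈ P.parts, I ⊆ A ∨ Disjoint I A) → ∑ i ∈ A, g i = 0 := by
    intro A hA
    have e1 : A = P.parts.biUnion (fun I => I ∩ A) := by
      rw [← biUnion_inter]
      have : P.parts.biUnion (fun I => I) = univ := P.biUnion_parts
      rw [this, univ_inter]
    rw [e1, sum_biUnion]
    · refine sum_eq_zero fun I hI => ?_
      rcases hA I hI with h | h
      · rw [inter_eq_left.2 h]; exact (hP I hI).2.1
      · rw [disjoint_iff_inter_eq_empty.1 h]; simp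
    · intro I hI J hJ hIJ
      exact Finset.disjoint_of_subset_left inter_subset_left
        (Finset.disjoint_of_subset_right inter_subset_left (P.disjoint hI hJ hIJ))
  have hu : ∑ i, g i = 0 := hsumP univ fun I _ => Or.inl (subset_univ _)
  have hsat : ∀ A : Finset (Fin ℓ), ∑ i ∈ A, g i = 0 → ∀ I ∈ P.parts, I ⊆ A ∨ Disjoint I A := by
    intro A hA0 I hI
    obtain ⟨Q, hQ⟩ := empty_fact g A hA0
    obtain ⟨R, hR, hQR⟩ := extend_fact g _ A univ (subset_univ _) Q hQ hA0 hu rfl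
    have hRP : R = P := huniq R hR
    subst hRP
    by_cases hd : Disjoint I A
    · exact Or.inr hd
    · rw [Finset.not_disjoint_iff] at hd
      obtain ⟨x, hxI, hxA⟩ := hd
      obtain ⟨J, hJ, hxJ⟩ := Q.exists_mem hxA
      left
      have : I = J := R.eq_of_mem_parts hI (hQR hJ) hxI hxJ
      rw [this]
      exact Q.le hJ
  refine ⟨hu, fun A _ B _ hA0 hB0 => hsumP _ fun I hI => ?_⟩
  rcases hsat A hA0 I hI with h1 | h1
  · rcases hsat B hB0 I hI with h2 | h2
    · exact Or.inl (subset_inter h1 h2)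
    · exact Or.inr (Finset.disjoint_of_subset_right inter_subset_right h2)
  · exact Or.inr (Finset.disjoint_of_subset_right inter_subset_left h1)

lemma IsUFIM_of_UF {G : Type*} [AddCommGroup G] {ℓ : ℕ} (g : Fin ℓ → G) (h : UF_s5 univ g)
    (hne : ∀ i, g i ≠ 0) : IsUFIM g := by
  refine ⟨hne, ?_⟩
  obtain ⟨P, hP⟩ := empty_fact g univ h.1
  have key : ∀ R S : Finpartition (univ : Finset (Fin ℓ)), IsFactorization g R →
      IsFactorization g S → R.parts ⊆ S.parts := by
    intro R S hR hS I hI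
    obtain ⟨⟨x, hx⟩, hI0, hIm⟩ := hR I hI
    obtain ⟨J, hJ, hxJ⟩ := S.exists_mem (mem_univ x)
    obtain ⟨-, hJ0, hJm⟩ := hS J hJ
    have h0 := h.2 I (subset_univ _) J (subset_univ _) hI0 hJ0
    have hn : (I ∩ J).Nonempty := ⟨x, mem_inter.2 ⟨hx, hxJ⟩⟩
    have e1 : I ∩ J = I := by
      by_contra hc
      exact hIm _ (Finset.ssubset_iff_subset_ne.2 ⟨inter_subset_left, hc⟩) hn h0
    have e2 : I ∩ J = J := by
      by_contra hc
      exact hJm _ (Finset.ssubset_iff_subset_ne.2 ⟨inter_subset_right, hc⟩) hn h0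
    rw [← e1, e2]; exact hJ
  exact ⟨P, hP, fun R hR => Finpartition.ext (Subset.antisymm (key R P hR hP) (key P R hP hR))⟩

lemma crossNum_le (p : ℕ) (hp : p.Prime) (hp2 : p ≠ 2) (m n ℓ : ℕ)
    (g : Fin ℓ → ZMod (p ^ m) × (Fin n → ZMod 2)) (hg : IsUFIM g) :
    crossNum g ≤ (∑ k ∈ Finset.range m, (1 : ℝ) / (p : ℝ) ^ k) + n := by
  let g' : ℕ → ZMod (p ^ m) × (Fin n → ZMod 2) := fun i => if h : i < ℓ then g ⟨i, h⟩ else 0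
  have hg' : ∀ i : Fin ℓ, g' (Fin.valEmbedding i) = g i := fun i => by simp [g']
  have := upper_main p hp hp2 m n _ g' ((UF_of_IsUFIM g hg).map Fin.valEmbedding g' hg')
  rw [sum_map] at this
  simp only [hg'] at this
  rw [add_comm]
  refine le_trans (le_of_eq ?_) this
  unfold crossNum
  refine sum_congr rfl fun i _ => ?_
  unfold wt
  rw [if_neg (hg.1 i)]

lemma digits_zero (p : ℕ) (hp : p.Prime) (m : ℕ) : ∀ d : ℕ → ℤ,
    (∀ k < m, (p : ℤ) ∣ d k → d k = 0) → (p : ℤ) ^ m ∣ ∑ k ∈ range m, (p : ℤ) ^ k * d k →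
    ∀ k < m, d k = 0 := by
  induction m with
  | zero => intro d _ _ k hk; omega
  | succ m ih =>
    intro d hd hdvd
    have hp0 : (p : ℤ) ≠ 0 := by exact_mod_cast hp.ne_zero
    rw [sum_range_succ'] at hdvd
    have e : ∑ k ∈ range m, (p : ℤ) ^ (k + 1) * d (k + 1) =
        p * ∑ k ∈ range m, (p : ℤ) ^ k * d (k + 1) := by
      rw [mul_sum]; exact sum_congr rfl fun k _ => by ring
    rw [e, pow_zero, one_mul] at hdvd
    have h0 : d 0 = 0 := by
      apply hd 0 (by omega)
      have h1 : (p : ℤ) ∣ p * ∑ k ∈ range m, (p : ℤ) ^ k * d (k + 1) + d 0 :=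
        (dvd_pow_self _ (by omega)).trans hdvd
      exact (Int.dvd_add_right (dvd_mul_right _ _)).1 h1
    rw [h0, add_zero, pow_succ', mul_dvd_mul_iff_left hp0] at hdvd
    have := ih (fun k => d (k + 1)) (fun k hk => hd (k + 1) (by omega)) hdvd
    intro k hk
    cases k with
    | zero => exact h0
    | succ k => exact this k (by omega)

/-- The extremal example. -/
def exG (p m n : ℕ) [NeZero p] :
    (Fin m × Fin p) ⊕ (Fin n × Fin 2) → ZMod (p ^ m) × (Fin n → ZMod 2)
  | .inl (k, j) => ((((p : ℤ) ^ (k : ℕ) * (1 - if j = 0 then (p : ℤ) else 0) : ℤ) : ZMod (p ^ m)), 0)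
  | .inr (i, _) => (0, Pi.single i 1)

def Sat {p m n : ℕ} (A : Finset ((Fin m × Fin p) ⊕ (Fin n × Fin 2))) : Prop :=
  (∀ k j j', Sum.inl (k, j) ∈ A → Sum.inl (k, j') ∈ A) ∧
  (∀ i b b', Sum.inr (i, b) ∈ A → Sum.inr (i, b') ∈ A)

lemma exG_sum (p m n : ℕ) [NeZero p] (A : Finset ((Fin m × Fin p) ⊕ (Fin n × Fin 2))) :
    ∑ x ∈ A, exG p m n x =
      (((∑ k : Fin m, (p : ℤ) ^ (k : ℕ) * ∑ j : Fin p, if Sum.inl (k, j) ∈ A then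
        (1 - if j = 0 then (p : ℤ) else 0) else 0 : ℤ) : ZMod (p ^ m)),
      fun i => ∑ b : Fin 2, if Sum.inr (i, b) ∈ A then 1 else 0) := by
  have e : ∑ x ∈ A, exG p m n x = ∑ x, if x ∈ A then exG p m n x else 0 := by
    simp
  rw [e, Fintype.sum_sum_type, Fintype.sum_prod_type, Fintype.sum_prod_type]
  refine Prod.ext ?_ ?_
  · rw [Prod.fst_add, Prod.fst_sum, Prod.fst_sum]
    rw [show ∑ c : Fin n, (∑ y : Fin 2, if Sum.inr (c, y) ∈ A then exG p m n (Sum.inr (c, y)) else 0).1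
      = 0 from sum_eq_zero fun c _ => by
        rw [Prod.fst_sum]; exact sum_eq_zero fun y _ => by split_ifs <;> simp [exG]]
    rw [add_zero]
    push_cast
    refine sum_congr rfl fun k _ => ?_
    rw [Prod.fst_sum, mul_sum]
    refine sum_congr rfl fun j _ => ?_
    split_ifs <;> simp_all [exG]
  · rw [Prod.snd_add, Prod.snd_sum, Prod.snd_sum]
    rw [show ∑ c : Fin m, (∑ y : Fin p, if Sum.inl (c, y) ∈ A then exG p m n (Sum.inl (c, y)) else 0).2
      = 0 from sum_eq_zero fun c _ => by
        rw [Prod.snd_sum]; exact sum_eq_zero fun y _ => by split_ifs <;> simp [exG]]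
    rw [zero_add]
    ext i
    rw [Finset.sum_apply]
    rw [Finset.sum_eq_single i]
    · rw [Prod.snd_sum, Finset.sum_apply]
      change _ = ∑ b : Fin 2, (if Sum.inr (i, b) ∈ A then (1 : ZMod 2) else 0)
      refine sum_congr rfl fun b _ => ?_
      split_ifs <;> simp [exG]
    · intro c _ hc
      rw [Prod.snd_sum, Finset.sum_apply]
      refine sum_eq_zero fun b _ => ?_
      split_ifs <;> simp [exG, hc.symm]
    · simp

lemma inner_eq (p : ℕ) [NeZero p] (S : Fin p → Prop) [DecidablePred S] :
    (∑ j : Fin p, if S j then (1 - if j = 0 then (p : ℤ) else 0) else 0) =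
      ((univ.filter S).card : ℤ) - if S 0 then (p : ℤ) else 0 := by
  have : ∀ j : Fin p, (if S j then (1 - if j = 0 then (p : ℤ) else 0) else 0) =
      (if S j then 1 else 0) - if j = 0 then (if S 0 then (p : ℤ) else 0) else 0 := by
    intro j
    by_cases hj : j = 0
    · subst hj; split_ifs <;> simp
    · simp [hj]
  rw [sum_congr rfl fun j _ => this j, sum_sub_distrib, sum_boole, sum_ite_eq']
  simp

lemma inner_zero (p : ℕ) [NeZero p] (S : Fin p → Prop) [DecidablePred S]
    (h : (p : ℤ) ∣ ∑ j : Fin p, if S j then (1 - if j = 0 then (p : ℤ) else 0) else 0) :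
    (∀ j, S j) ∨ ∀ j, ¬ S j := by
  rw [inner_eq] at h
  have h1 : (p : ℤ) ∣ ((univ.filter S).card : ℤ) := by
    have h2 : (p : ℤ) ∣ if S 0 then (p : ℤ) else 0 := by split_ifs <;> simp
    exact (dvd_sub_left h2).1 h
  have h3 : p ∣ (univ.filter S).card := by exact_mod_cast h1
  by_cases h0 : (univ.filter S).card = 0
  · right
    intro j hj
    rw [card_eq_zero] at h0
    have : j ∈ univ.filter S := by simp [hj]
    simp [h0] at this
  · left
    have h4 := Nat.le_of_dvd (Nat.pos_of_ne_zero h0) h3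
    have h5 : univ.filter S = univ := by
      apply eq_univ_of_card
      refine le_antisymm (card_le_univ _) (by simpa using h4)
    intro j
    have : j ∈ univ.filter S := by rw [h5]; simp
    simpa using this

lemma inner_of_sat (p : ℕ) [NeZero p] (S : Fin p → Prop) [DecidablePred S]
    (h : (∀ j, S j) ∨ ∀ j, ¬ S j) :
    (∑ j : Fin p, if S j then (1 - if j = 0 then (p : ℤ) else 0) else 0) = 0 := by
  rw [inner_eq]
  rcases h with h | h <;> simp [h]

lemma exG_zero_iff (p m n : ℕ) (hp : p.Prime) [NeZero p]
    (A : Finset ((Fin m × Fin p) ⊕ (Fin n × Fin 2))) :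
    ∑ x ∈ A, exG p m n x = 0 ↔ Sat A := by
  rw [exG_sum, Prod.mk_eq_zero]
  constructor
  · rintro ⟨h1, h2⟩
    rw [ZMod.intCast_zmod_eq_zero_iff_dvd] at h1
    push_cast at h1
    let d : ℕ → ℤ := fun k => if hk : k < m then ∑ j : Fin p, if Sum.inl (⟨k, hk⟩, j) ∈ A then
        (1 - if j = 0 then (p : ℤ) else 0) else 0 else 0
    have e1 : ∑ k : Fin m, (p : ℤ) ^ (k : ℕ) * (∑ j : Fin p, if Sum.inl (k, j) ∈ A then
        (1 - if j = 0 then (p : ℤ) else 0) else 0) = ∑ k ∈ range m, (p : ℤ) ^ k * d k := by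
      rw [← Fin.sum_univ_eq_sum_range (fun k => (p : ℤ) ^ k * d k)]
      refine sum_congr rfl fun k _ => ?_
      simp [d]
    rw [e1] at h1
    have hd := digits_zero p hp m d (by
      intro k hk hdv
      simp only [d, hk, dif_pos] at hdv ⊢
      exact inner_of_sat p _ (inner_zero p _ hdv)) h1
    constructor
    · intro k j j' hj
      have h3 := hd k k.2
      simp only [d, k.2, dif_pos] at h3
      rcases inner_zero p (fun j => Sum.inl (k, j) ∈ A) (by rw [h3]; simp) with h | h
      · exact h j'
      · exact absurd hj (h j)
    · intro i b b' hb
      have h3 := congrFun h2 i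
      simp only [Fin.sum_univ_two, Pi.zero_apply] at h3
      by_cases c0 : Sum.inr (i, 0) ∈ A <;> by_cases c1 : Sum.inr (i, 1) ∈ A <;>
        simp only [c0, c1, if_true, if_false] at h3
      · fin_cases b' <;> assumption
      · exact absurd h3 (by decide)
      · exact absurd h3 (by decide)
      · fin_cases b
        · exact absurd hb c0
        · exact absurd hb c1
  · rintro ⟨h1, h2⟩
    constructor
    · rw [show (∑ k : Fin m, (p : ℤ) ^ (k : ℕ) * (∑ j : Fin p, if Sum.inl (k, j) ∈ A then
        (1 - if j = 0 then (p : ℤ) else 0) else 0)) = 0 from ?_, Int.cast_zero]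
      refine sum_eq_zero fun k _ => ?_
      rw [inner_of_sat p (fun j => Sum.inl (k, j) ∈ A), mul_zero]
      by_cases h : ∃ j, Sum.inl (k, j) ∈ A
      · obtain ⟨j, hj⟩ := h
        exact Or.inl fun j' => h1 k j j' hj
      · push Not at h; exact Or.inr h
    · ext i
      simp only [Fin.sum_univ_two, Pi.zero_apply]
      have a := h2 i 0 1
      have b := h2 i 1 0
      by_cases c0 : Sum.inr (i, 0) ∈ A <;> by_cases c1 : Sum.inr (i, 1) ∈ A <;>
        simp only [c0, c1, if_true, if_false]
      · decide
      · exact absurd (a c0) c1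
      · exact absurd (b c1) c0
      · decide

lemma exG_UF (p m n : ℕ) (hp : p.Prime) [NeZero p] : UF_s5 univ (exG p m n) := by
  refine ⟨(exG_zero_iff p m n hp _).2 ⟨by simp, by simp⟩, fun A _ B _ hA hB => ?_⟩
  rw [exG_zero_iff p m n hp] at hA hB ⊢
  constructor
  · intro k j j' h
    rw [mem_inter] at h ⊢
    exact ⟨hA.1 k j j' h.1, hB.1 k j j' h.2⟩
  · intro k j j' h
    rw [mem_inter] at h ⊢
    exact ⟨hA.2 k j j' h.1, hB.2 k j j' h.2⟩

lemma exG_ne (p m n : ℕ) (hp : p.Prime) [NeZero p] (x) : exG p m n x ≠ 0 := by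
  intro h
  have h1 : ∑ y ∈ {x}, exG p m n y = 0 := by simpa using h
  rw [exG_zero_iff p m n hp] at h1
  rcases x with ⟨k, j⟩ | ⟨i, b⟩
  · have : Nontrivial (Fin p) := Fin.nontrivial_iff_two_le.2 hp.two_le
    obtain ⟨j', hj'⟩ := exists_ne j
    have := h1.1 k j j' (by simp)
    simp at this
    exact hj' this
  · obtain ⟨j', hj'⟩ := exists_ne b
    have := h1.2 i b j' (by simp)
    simp at this
    exact hj' this

lemma exG_cross (p m n : ℕ) (hp : p.Prime) [NeZero p] :
    (∑ k ∈ Finset.range m, (1 : ℝ) / (p : ℝ) ^ k) + n ≤ ∑ x, wt (exG p m n x) := by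
  have hp0 : (0 : ℝ) < p := by exact_mod_cast hp.pos
  rw [Fintype.sum_sum_type, Fintype.sum_prod_type, Fintype.sum_prod_type]
  refine add_le_add ?_ ?_
  · rw [← sum_range_reflect, ← Fin.sum_univ_eq_sum_range (fun k => 1 / (p : ℝ) ^ (m - 1 - k))]
    refine sum_le_sum fun k _ => ?_
    have h1 : ∀ j : Fin p, 1 / (p : ℝ) ^ (m - 1 - (k : ℕ)) / p ≤ wt (exG p m n (Sum.inl (k, j))) := by
      intro j
      have hk := k.2
      have := wt_ge _ (exG_ne p m n hp (Sum.inl (k, j))) (p ^ (m - k)) (pow_pos hp.pos _) (by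
        simp only [exG, Prod.smul_mk, smul_zero, Prod.mk_eq_zero, and_true]
        rw [nsmul_eq_mul, ← Int.cast_natCast, ← Int.cast_mul, ZMod.intCast_zmod_eq_zero_iff_dvd]
        push_cast
        rw [← mul_assoc, ← pow_add, Nat.sub_add_cancel hk.le]
        exact dvd_mul_right _ _)
      rw [div_div, ← pow_succ, show m - 1 - (k : ℕ) + 1 = m - k by omega]
      exact_mod_cast this
    calc 1 / (p : ℝ) ^ (m - 1 - (k : ℕ)) = ∑ j : Fin p, 1 / (p : ℝ) ^ (m - 1 - (k : ℕ)) / p := by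
          rw [sum_const, card_univ, Fintype.card_fin, nsmul_eq_mul]; field_simp
      _ ≤ _ := sum_le_sum fun j _ => h1 j
  · have h1 : ∀ (i : Fin n) (b : Fin 2), 1 / 2 ≤ wt (exG p m n (Sum.inr (i, b))) := by
      intro i b
      have := wt_ge _ (exG_ne p m n hp (Sum.inr (i, b))) 2 (by norm_num) (by
        simp only [exG, Prod.smul_mk, smul_zero, Prod.mk_eq_zero, true_and]
        rw [← Pi.single_smul, show (2 • (1 : ZMod 2)) = 0 by decide, Pi.single_zero])
      simpa using this
    calc (n : ℝ) = ∑ i : Fin n, ∑ b : Fin 2, (1 / 2 : ℝ) := by simp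
      _ ≤ _ := sum_le_sum fun i _ => sum_le_sum fun b _ => h1 i b

lemma K1_first (p : ℕ) (hp : p.Prime) (hp2 : p ≠ 2) (m n : ℕ) :
    K1 (ZMod (p ^ m) × (Fin n → ZMod 2)) =
      (∑ k ∈ Finset.range m, (1 : ℝ) / (p : ℝ) ^ k) + n := by
  have : NeZero p := ⟨hp.ne_zero⟩
  unfold K1
  let e := Fintype.equivFin ((Fin m × Fin p) ⊕ (Fin n × Fin 2))
  have hU : IsUFIM (exG p m n ∘ e.symm) := by
    refine IsUFIM_of_UF _ ?_ (fun i => exG_ne p m n hp _)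
    have := (exG_UF p m n hp).map e.toEmbedding (exG p m n ∘ e.symm) (by simp)
    rwa [map_univ_equiv] at this
  have hub : ∀ x ∈ {x : ℝ | ∃ (ℓ : ℕ) (g : Fin ℓ → ZMod (p ^ m) × (Fin n → ZMod 2)),
      IsUFIM g ∧ crossNum g = x}, x ≤ (∑ k ∈ Finset.range m, (1 : ℝ) / (p : ℝ) ^ k) + n := by
    rintro x ⟨ℓ, g, hg, rfl⟩
    exact crossNum_le p hp hp2 m n ℓ g hg
  refine le_antisymm (csSup_le ⟨_, _, _, hU, rfl⟩ hub) ?_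
  refine le_trans ?_ (le_csSup ⟨_, hub⟩ ⟨_, _, hU, rfl⟩)
  refine (exG_cross p m n hp).trans (le_of_eq ?_)
  unfold crossNum
  rw [← e.symm.sum_comp]
  refine sum_congr rfl fun i _ => ?_
  unfold wt
  rw [if_neg (exG_ne p m n hp _)]
  rfl

/-- `K₁(C_{p^m} ⊕ C_2^n) = Σ_{k=1}^m 1/p^{k−1} + n = (p^m − 1)/(p^m − p^{m−1}) + n`
for an odd prime `p`. -/
theorem K1_pm_2n (p : ℕ) (hp : p.Prime) (hp2 : p ≠ 2) (m n : ℕ) (hm : 1 ≤ m) (hn : 1 ≤ n) :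
    K1 (ZMod (p ^ m) × (Fin n → ZMod 2)) =
      (∑ k ∈ Finset.range m, (1 : ℝ) / (p : ℝ) ^ k) + n ∧
    K1 (ZMod (p ^ m) × (Fin n → ZMod 2)) =
      ((p : ℝ) ^ m - 1) / ((p : ℝ) ^ m - (p : ℝ) ^ (m - 1)) + n := by
  have h1 := K1_first p hp hp2 m n
  refine ⟨h1, h1.trans ?_⟩
  congr 1
  have hp1 : (1 : ℝ) < p := by exact_mod_cast hp.one_lt
  obtain ⟨m, rfl⟩ : ∃ k, m = k + 1 := ⟨m - 1, by omega⟩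
  rw [Nat.add_sub_cancel]
  have hpm : (0 : ℝ) < (p : ℝ) ^ m := by positivity
  have hne : (p : ℝ) ^ (m + 1) - (p : ℝ) ^ m ≠ 0 := by
    rw [pow_succ]; nlinarith
  rw [eq_div_iff hne]
  clear h1 hne hpm hm
  induction m with
  | zero => simp
  | succ m ih =>
    rw [sum_range_succ, add_mul]
    have e : (∑ k ∈ Finset.range (m + 1), (1 : ℝ) / (p : ℝ) ^ k) *
        ((p : ℝ) ^ (m + 1 + 1) - (p : ℝ) ^ (m + 1)) = p * ((p : ℝ) ^ (m + 1) - 1) := by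
      rw [← ih]; ring
    rw [e]
    have hpm : (p : ℝ) ^ (m + 1) ≠ 0 := by positivity
    field_simp
    ring
end
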